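/- arXiv:1101.1231 — 10 statements merged into one kernel-verified Lean document; each statement's English description precedes it below -/
import Mathlib

section
/- Let n, m be positive integers, A, Q ∈ ℂ^{n×n} with Q = Q*, B, C ∈ ℂ^{n×m}, R = R* ∈ ℂ^{m×m}, and let Y ∈ ℂ^{n×n} be Hermitian. For every ω ∈ ℝ such that iω is not an eigenvalue of A, setting W(iω) = [[(iωI − A)^{−1}B], [I_m]] ∈ ℂ^{(n+m)×m}, the spectral density function satisfies Φ(iω) = W(iω)* M(Y) W(iω), where M(Y) = [[A*Y + YA + Q, YB + C], [B*Y + C*, R]]. In particular, if M(Y) is positive semidefinite, then Φ(iω) is positive semidefinite for all ω ∈ ℝ with iω ∉ σ(A). -/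
open Matrix ComplexOrder

theorem popov_aux {n m : ℕ}
    (A Q : Matrix (Fin n) (Fin n) ℂ) (B C X : Matrix (Fin n) (Fin m) ℂ)
    (R : Matrix (Fin m) (Fin m) ℂ) (Y : Matrix (Fin n) (Fin n) ℂ) (s : ℂ) (hs : star s = -s)
    (hB : B = s • X - A * X) :
    (fromRows X (1 : Matrix (Fin m) (Fin m) ℂ))ᴴ * fromBlocks Q C Cᴴ R *
      fromRows X (1 : Matrix (Fin m) (Fin m) ℂ) =
    (fromRows X (1 : Matrix (Fin m) (Fin m) ℂ))ᴴ *
      fromBlocks (Aᴴ * Y + Y * A + Q) (Y * B + C) (Bᴴ * Y + Cᴴ) R *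
      fromRows X (1 : Matrix (Fin m) (Fin m) ℂ) := by
  have hBH : Bᴴ = (-s) • Xᴴ - Xᴴ * Aᴴ := by
    rw [hB, conjTranspose_sub, conjTranspose_smul, conjTranspose_mul, hs]
  rw [hBH, hB]
  simp only [conjTranspose_fromRows_eq_fromCols_conjTranspose, fromCols_mul_fromBlocks,
    fromCols_mul_fromRows, conjTranspose_one, Matrix.one_mul, Matrix.mul_one]
  simp only [Matrix.mul_add, Matrix.add_mul, Matrix.mul_sub, Matrix.sub_mul, Matrix.mul_smul,
    Matrix.smul_mul, Matrix.mul_assoc, neg_smul, Matrix.neg_mul]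
  abel

/-- For every `ω ∈ ℝ` such that `iω` is not an eigenvalue of `A`, the Popov function
satisfies `Φ(iω) = W(iω)ᴴ M(Y) W(iω)` for any Hermitian `Y`, where
`W(iω) = [(iωI − A)⁻¹ B; I]`.  In particular if `M(Y)` is positive semidefinite then
`Φ(iω)` is positive semidefinite for all such `ω`. -/
theorem popov_function_via_LMI_matrix
    (n m : ℕ) (hn : 0 < n) (hm : 0 < m)
    (A Q : Matrix (Fin n) (Fin n) ℂ) (B C : Matrix (Fin n) (Fin m) ℂ)
    (R : Matrix (Fin m) (Fin m) ℂ) (hQ : Qᴴ = Q) (hR : Rᴴ = R)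
    (Y : Matrix (Fin n) (Fin n) ℂ) (hY : Yᴴ = Y) :
    (∀ ω : ℝ,
      IsUnit ((Complex.I * (ω : ℂ)) • (1 : Matrix (Fin n) (Fin n) ℂ) - A) →
      (fromRows (((Complex.I * (ω : ℂ)) • (1 : Matrix (Fin n) (Fin n) ℂ) - A)⁻¹ * B)
            (1 : Matrix (Fin m) (Fin m) ℂ))ᴴ *
          fromBlocks Q C Cᴴ R *
          fromRows (((Complex.I * (ω : ℂ)) • (1 : Matrix (Fin n) (Fin n) ℂ) - A)⁻¹ * B)
            (1 : Matrix (Fin m) (Fin m) ℂ) =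
        (fromRows (((Complex.I * (ω : ℂ)) • (1 : Matrix (Fin n) (Fin n) ℂ) - A)⁻¹ * B)
            (1 : Matrix (Fin m) (Fin m) ℂ))ᴴ *
          fromBlocks (Aᴴ * Y + Y * A + Q) (Y * B + C) (Bᴴ * Y + Cᴴ) R *
          fromRows (((Complex.I * (ω : ℂ)) • (1 : Matrix (Fin n) (Fin n) ℂ) - A)⁻¹ * B)
            (1 : Matrix (Fin m) (Fin m) ℂ)) ∧
    ((fromBlocks (Aᴴ * Y + Y * A + Q) (Y * B + C) (Bᴴ * Y + Cᴴ) R).PosSemidef →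
      ∀ ω : ℝ,
        IsUnit ((Complex.I * (ω : ℂ)) • (1 : Matrix (Fin n) (Fin n) ℂ) - A) →
        ((fromRows (((Complex.I * (ω : ℂ)) • (1 : Matrix (Fin n) (Fin n) ℂ) - A)⁻¹ * B)
              (1 : Matrix (Fin m) (Fin m) ℂ))ᴴ *
            fromBlocks Q C Cᴴ R *
            fromRows (((Complex.I * (ω : ℂ)) • (1 : Matrix (Fin n) (Fin n) ℂ) - A)⁻¹ * B)
              (1 : Matrix (Fin m) (Fin m) ℂ)).PosSemidef) := by
  have key : ∀ ω : ℝ, IsUnit ((Complex.I * (ω : ℂ)) • (1 : Matrix (Fin n) (Fin n) ℂ) - A) → _ :=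
    fun ω h => popov_aux A Q B C
      (((Complex.I * (ω : ℂ)) • (1 : Matrix (Fin n) (Fin n) ℂ) - A)⁻¹ * B) R Y
      (Complex.I * (ω : ℂ)) (by simp) (by
        have h2 := Matrix.mul_nonsing_inv_cancel_left _ B ((Matrix.isUnit_iff_isUnit_det _).1 h)
        rw [Matrix.sub_mul, Matrix.smul_mul, Matrix.one_mul] at h2
        exact h2.symm)
  refine ⟨key, fun hM ω h => ?_⟩
  rw [key ω h]
  exact hM.conjTranspose_mul_mul_same _
end

section
/- Let n, m be positive integers, A, Q ∈ ℂ^{n×n} with Q = Q*, B, C ∈ ℂ^{n×m}, R = R* ∈ ℂ^{m×m}. Assume the pair (A, B) is controllable, i.e. rank [sI − A, B] = n for all s ∈ ℂ. Then the following are equivalent: (1) there exist p ∈ ℕ, X ∈ ℂ^{n×n} Hermitian, K ∈ ℂ^{p×n}, L ∈ ℂ^{p×m} satisfying the Lur'e equations A*X + XA + Q = K*K, XB + C = K*L, R = L*L; (2) there exists a Hermitian Y ∈ ℂ^{n×n} with M(Y) = [[A*Y + YA + Q, YB + C], [B*Y + C*, R]] positive semidefinite; (3) for all ω ∈ ℝ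 with iω not an eigenvalue of A, the matrix Φ(iω) is positive semidefinite. -/
open Matrix ComplexOrder

set_option linter.unusedSectionVars false

namespace LureAux

section
variable {n m : Type*} [Fintype n] [DecidableEq n] [Fintype m] [DecidableEq m]


lemma psd_root {P : Matrix n n ℂ} (hP : P.PosSemidef) :
    ∃ F G : Matrix n n ℂ, Fᴴ = F ∧ Gᴴ = G ∧ F * F = P ∧ F * G = G * F ∧
      F * G * F = F ∧ G * F * G = G := by
  have hsa : IsSelfAdjoint P := hP.1
  have hfin : (spectrum ℝ P).Finite := Matrix.finite_real_spectrum
  have hc : ∀ f : ℝ → ℝ, ContinuousOn f (spectrum ℝ P) := fun f => hfin.continuousOn f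
  have hnn : ∀ x ∈ spectrum ℝ P, 0 ≤ x :=
    fun x hx => by
      have := ((posSemidef_iff_isHermitian_and_spectrum_nonneg (A := P)).1 hP).2
        (spectrum.algebraMap_mem ℂ hx)
      simpa using this
  refine ⟨cfc Real.sqrt P, cfc (fun x => (Real.sqrt x)⁻¹) P, ?_, ?_, ?_, ?_, ?_, ?_⟩
  · exact (IsSelfAdjoint.cfc : IsSelfAdjoint (cfc Real.sqrt P))
  · exact (IsSelfAdjoint.cfc : IsSelfAdjoint (cfc (fun x => (Real.sqrt x)⁻¹) P))
  · rw [← cfc_mul _ _ P (hc _) (hc _)]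
    conv_rhs => rw [← cfc_id ℝ P hsa]
    exact cfc_congr fun x hx => Real.mul_self_sqrt (hnn x hx)
  · rw [← cfc_mul _ _ P (hc _) (hc _), ← cfc_mul _ _ P (hc _) (hc _)]
    exact cfc_congr fun x hx => mul_comm _ _
  · rw [← cfc_mul _ _ P (hc _) (hc _), ← cfc_mul _ _ P (hc _) (hc _)]
    exact cfc_congr fun x hx => mul_inv_mul_cancel _
  · rw [← cfc_mul _ _ P (hc _) (hc _), ← cfc_mul _ _ P (hc _) (hc _)]
    exact cfc_congr fun x hx => by simpa using mul_inv_mul_cancel (Real.sqrt x)⁻¹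

lemma trace_nonneg_of_cols (W U : Matrix n n ℂ) (hU : U * Uᴴ = 1)
    (h : ∀ k, 0 ≤ star (U.col k) ⬝ᵥ (W *ᵥ U.col k)) : 0 ≤ W.trace := by
  have h1 : W.trace = (Uᴴ * W * U).trace := by
    rw [Matrix.trace_mul_cycle, hU, one_mul]
  rw [h1, Matrix.trace]
  refine Finset.sum_nonneg fun k _ => ?_
  convert h k using 1
  simp only [diag_apply, Matrix.mul_assoc]
  rfl

lemma trace_mul_psd {S R : Matrix m m ℂ} (hS : S.PosSemidef) (hR : R.PosSemidef) :
    0 ≤ (S * R).trace := by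
  obtain ⟨F, G, hF, -, hFF, -⟩ := psd_root hS
  rw [← hFF, Matrix.trace_mul_cycle]
  have := hR.conjTranspose_mul_mul_same F
  rw [hF] at this
  rw [← Matrix.trace_mul_cycle, Matrix.trace_mul_cycle, ← Matrix.trace_mul_cycle]
  rw [Matrix.mul_assoc, Matrix.trace_mul_comm]
  exact this.trace_nonneg

lemma skew_unitary (T : Matrix n n ℂ) (hT : Tᴴ = -T) :
    ∃ (U : Matrix n n ℂ) (ω : n → ℝ), U * Uᴴ = 1 ∧
      ∀ k, T *ᵥ U.col k = (Complex.I * (ω k : ℂ)) • U.col k := by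
  have hH : (Complex.I • T).IsHermitian := by
    simp [IsHermitian, conjTranspose_smul, hT]
  refine ⟨hH.eigenvectorUnitary, fun k => - hH.eigenvalues k, ?_, fun k => ?_⟩
  · exact Unitary.coe_mul_star_self _
  · have := hH.mulVec_eigenvectorBasis k
    rw [IsHermitian.eigenvectorUnitary_col_eq]
    rw [smul_mulVec] at this
    have h2 := congrArg (fun v => (-Complex.I) • v) this
    simp only [smul_smul] at h2
    simp only [neg_mul, Complex.I_mul_I, neg_neg, one_smul] at h2
    rw [h2]
    ext i
    simp [mul_assoc]

lemma key (A : Matrix n n ℂ) (B : Matrix n m ℂ) (P : Matrix n n ℂ) (N : Matrix m n ℂ)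
    (S : Matrix m m ℂ) (hZ : (fromBlocks P Nᴴ N S).PosSemidef)
    (hE : (A * P + B * N) + (A * P + B * N)ᴴ = 0)
    (Q : Matrix n n ℂ) (C : Matrix n m ℂ) (R : Matrix m m ℂ) (hR : R.PosSemidef)
    (hq : ∀ (ω : ℝ) (x : n → ℂ) (w : m → ℂ), A *ᵥ x + B *ᵥ w = (Complex.I * (ω : ℂ)) • x →
      0 ≤ star (Sum.elim x w) ⬝ᵥ (fromBlocks Q C Cᴴ R *ᵥ Sum.elim x w)) :
    0 ≤ (fromBlocks P Nᴴ N S * fromBlocks Q C Cᴴ R).trace := by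
  have hP : P.PosSemidef := hZ.submatrix Sum.inl
  obtain ⟨F, D, hF, hD, hFF, hFD, hFDF, hDFD⟩ := psd_root hP
  -- N kills the kernel
  have hPD : P * (1 - F * D) = 0 := by
    rw [mul_sub, ← hFF, mul_one, hFD, Matrix.mul_assoc, ← Matrix.mul_assoc F D F, hFDF, sub_self]
  have hN : N * (F * D) = N := by
    obtain ⟨E, -, hEh, -, hEE, -⟩ := psd_root hZ
    have h0 : fromBlocks P Nᴴ N S * fromRows (1 - F * D) (0 : Matrix m n ℂ) = 0 := by
      have h1 : (fromRows (1 - F * D) (0 : Matrix m n ℂ))ᴴ * (fromBlocks P Nᴴ N S *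
          fromRows (1 - F * D) (0 : Matrix m n ℂ)) = 0 := by
        rw [fromBlocks_mul_fromRows, conjTranspose_fromRows_eq_fromCols_conjTranspose,
          fromCols_mul_fromRows, hPD]
        simp
      rw [← hEE] at h1 ⊢
      have h2 : (E * fromRows (1 - F * D) (0 : Matrix m n ℂ))ᴴ *
          (E * fromRows (1 - F * D) (0 : Matrix m n ℂ)) = 0 := by
        rw [conjTranspose_mul, hEh, Matrix.mul_assoc, ← Matrix.mul_assoc E E]; exact h1
      rw [conjTranspose_mul_self_eq_zero] at h2
      rw [Matrix.mul_assoc, h2, Matrix.mul_zero]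
    rw [fromBlocks_mul_fromRows] at h0
    have h3 : N * (1 - F * D) = 0 := by
      ext i j
      have := congrFun (congrFun h0 (Sum.inr i)) j
      simpa using this
    rw [Matrix.mul_sub, Matrix.mul_one] at h3
    exact (sub_eq_zero.1 h3).symm
  set G : Matrix m n ℂ := N * D with hG
  have hGF : G * F = N := by rw [hG, Matrix.mul_assoc, ← hFD, hN]
  have hFG : F * Gᴴ = Nᴴ := by rw [← hGF, conjTranspose_mul G F, hF]
  have hGFD : G * (F * D) = G := by rw [hG, Matrix.mul_assoc, ← Matrix.mul_assoc D, hDFD]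
  -- Schur complement
  have hS : (S - G * Gᴴ).PosSemidef := by
    have := hZ.mul_mul_conjTranspose_same (fromCols (-(G * D)) (1 : Matrix m m ℂ))
    convert this using 1
    rw [fromCols_mul_fromBlocks, conjTranspose_fromCols_eq_fromRows_conjTranspose,
      fromCols_mul_fromRows]
    have e1 : G * D * P = N := by
      rw [← hFF, Matrix.mul_assoc, ← Matrix.mul_assoc D, ← hFD, hFDF, hGF]
    have e2 : G * D * Nᴴ = G * Gᴴ := by
      rw [← hFG, ← Matrix.mul_assoc, Matrix.mul_assoc G D F, ← hFD, hGFD]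
    simp only [Matrix.neg_mul, e1, e2]
    simp
    abel
  -- decomposition
  have hdec : fromBlocks P Nᴴ N S =
      fromRows F G * (fromRows F G)ᴴ + fromBlocks 0 0 0 (S - G * Gᴴ) := by
    rw [conjTranspose_fromRows_eq_fromCols_conjTranspose, fromRows_mul_fromCols,
      fromBlocks_add, hF, hFF, hFG, hGF]
    simp
  -- skew matrix
  set H := A * F + B * G with hH
  have hHF : H * F = A * P + B * N := by
    rw [hH, Matrix.add_mul, Matrix.mul_assoc, Matrix.mul_assoc, hFF, hGF]
  have hHFD : H * (F * D) = H := by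
    rw [hH, Matrix.add_mul, Matrix.mul_assoc, Matrix.mul_assoc, hGFD, hFD, ← Matrix.mul_assoc F, hFDF]
  have hsk : H * F = - (F * Hᴴ) := by
    rw [← hHF] at hE
    rw [conjTranspose_mul, hF] at hE
    exact eq_neg_of_add_eq_zero_left hE
  have hFDH : F * D * H = H := by
    calc F * D * H = F * D * (H * F * D) := by rw [Matrix.mul_assoc H, hHFD]
      _ = -(F * D * F * Hᴴ * D) := by rw [hsk]; simp [Matrix.mul_assoc]
      _ = H * F * D := by rw [hFDF, hsk]; simp
      _ = H := by rw [Matrix.mul_assoc, hHFD]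
  have hT : (D * H)ᴴ = -(D * H) := by
    have e : D * H = -(Hᴴ * D) := by
      calc D * H = D * (H * F * D) := by rw [Matrix.mul_assoc H, hHFD]
        _ = -((D * F) * Hᴴ * D) := by rw [hsk]; simp [Matrix.mul_assoc]
        _ = -((H * (F * D))ᴴ * D) := by
            rw [conjTranspose_mul, conjTranspose_mul, hF, hD]
        _ = _ := by rw [hHFD]
    rw [conjTranspose_mul, hD, e, neg_neg]
  obtain ⟨U, ω, hU, hUk⟩ := skew_unitary _ hT
  rw [hdec, Matrix.add_mul, trace_add]
  refine add_nonneg ?_ ?_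
  · rw [Matrix.mul_assoc, trace_mul_comm]
    refine trace_nonneg_of_cols _ U hU fun k => ?_
    have := hq (ω k) (F *ᵥ U.col k) (G *ᵥ U.col k) ?_
    · convert this using 1
      rw [← fromRows_mulVec, star_mulVec, ← dotProduct_mulVec, mulVec_mulVec, mulVec_mulVec,
        Matrix.mul_assoc]
    · rw [mulVec_mulVec, mulVec_mulVec, ← add_mulVec, ← hH, ← mulVec_smul, ← hUk, mulVec_mulVec,
        ← Matrix.mul_assoc, hFDH]
  · rw [fromBlocks_multiply]
    simp only [Matrix.zero_mul, add_zero, zero_add]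
    simp only [trace, Fintype.sum_sum_type, diag_apply, fromBlocks_apply₁₁, fromBlocks_apply₂₂]
    simpa [trace] using trace_mul_psd hS hR



/-- frequency condition -/
def FreqCond (A : Matrix n n ℂ) (B : Matrix n m ℂ) (M : Matrix (n ⊕ m) (n ⊕ m) ℂ) : Prop :=
  ∀ ω : ℝ,
        IsUnit ((Complex.I * (ω : ℂ)) • (1 : Matrix n n ℂ) - A) →
        ((fromRows (((Complex.I * (ω : ℂ)) • (1 : Matrix n n ℂ) - A)⁻¹ * B)
              (1 : Matrix m m ℂ))ᴴ * M *
            fromRows (((Complex.I * (ω : ℂ)) • (1 : Matrix n n ℂ) - A)⁻¹ * B)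
              (1 : Matrix m m ℂ)).PosSemidef

variable {A : Matrix n n ℂ} {B : Matrix n m ℂ} {M : Matrix (n ⊕ m) (n ⊕ m) ℂ}

lemma freq_unit (h : FreqCond A B M) (ω : ℝ)
    (hu : IsUnit ((Complex.I * (ω : ℂ)) • (1 : Matrix n n ℂ) - A)) (x : n → ℂ) (w : m → ℂ)
    (hx : A *ᵥ x + B *ᵥ w = (Complex.I * (ω : ℂ)) • x) :
    0 ≤ star (Sum.elim x w) ⬝ᵥ (M *ᵥ Sum.elim x w) := by
  have h1 := (h ω hu).dotProduct_mulVec_nonneg w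
  set s := Complex.I * (ω : ℂ)
  have hx2 : (s • (1 : Matrix n n ℂ) - A)⁻¹ *ᵥ (B *ᵥ w) = x := by
    have : B *ᵥ w = (s • (1 : Matrix n n ℂ) - A) *ᵥ x := by
      rw [sub_mulVec, smul_mulVec, one_mulVec, ← hx]; abel
    rw [this, mulVec_mulVec, nonsing_inv_mul _ ((isUnit_iff_isUnit_det _).1 hu), one_mulVec]
  have h2 : fromRows ((s • (1 : Matrix n n ℂ) - A)⁻¹ * B) (1 : Matrix m m ℂ) *ᵥ w
      = Sum.elim x w := by
    rw [fromRows_mulVec, ← mulVec_mulVec, hx2, one_mulVec]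
  rw [← h2]
  convert h1 using 1
  rw [star_mulVec, ← dotProduct_mulVec, mulVec_mulVec, mulVec_mulVec, Matrix.mul_assoc]

lemma eventually_unit (A : Matrix n n ℂ) (ω : ℝ) : ∀ᶠ t in nhdsWithin (0 : ℝ) {0}ᶜ,
    IsUnit ((Complex.I * ((ω + t : ℝ) : ℂ)) • (1 : Matrix n n ℂ) - A) := by
  have hf : {t : ℝ | ¬ IsUnit ((Complex.I * ((ω + t : ℝ) : ℂ)) • (1 : Matrix n n ℂ) - A)}.Finite := by
    refine Set.Finite.preimage (f := fun t : ℝ => Complex.I * ((ω + t : ℝ) : ℂ)) ?_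
      (Matrix.finite_spectrum A) |>.subset ?_
    · intro a _ b _ hab
      simpa using hab
    · intro t ht
      simp only [Set.mem_ofPred_eq] at ht
      simpa [spectrum.mem_iff, Algebra.algebraMap_eq_smul_one] using ht
  have h1 : ({t : ℝ | ¬ IsUnit ((Complex.I * ((ω + t : ℝ) : ℂ)) • (1 : Matrix n n ℂ) - A)} \ {0})ᶜ
      ∈ nhds (0 : ℝ) := (hf.subset Set.sdiff_subset).isClosed.isOpen_compl.mem_nhds (by simp)
  filter_upwards [nhdsWithin_le_nhds h1, self_mem_nhdsWithin] with t ht ht0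
  by_contra hc
  exact ht ⟨hc, ht0⟩

lemma continuous_quad (M : Matrix n n ℂ) {z : ℝ → n → ℂ} (hz : Continuous z) :
    Continuous fun t => star (z t) ⬝ᵥ (M *ᵥ z t) :=
  (hz.star).dotProduct (continuous_const.matrix_mulVec hz)

lemma nonneg_of_punctured {f : ℝ → ℂ} (hf : Continuous f)
    (h : ∀ᶠ t in nhdsWithin (0 : ℝ) {0}ᶜ, 0 ≤ f t) : 0 ≤ f 0 :=
  ge_of_tendsto ((hf.tendsto 0).mono_left nhdsWithin_le_nhds) h

lemma freq_all (h : FreqCond A B M) (ω : ℝ)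
    (hc : ∃ (V : Matrix n n ℂ) (W : Matrix m n ℂ),
      ((Complex.I * (ω : ℂ)) • (1 : Matrix n n ℂ) - A) * V + B * W = 1)
    (x : n → ℂ) (w : m → ℂ)
    (hx : A *ᵥ x + B *ᵥ w = (Complex.I * (ω : ℂ)) • x) :
    0 ≤ star (Sum.elim x w) ⬝ᵥ (M *ᵥ Sum.elim x w) := by
  obtain ⟨V, W, hVW⟩ := hc
  let D : ℝ → Matrix n n ℂ := fun t => 1 + (Complex.I * (t : ℂ)) • V
  have hD : Continuous D := by fun_prop
  let y : ℝ → n → ℂ := fun t => (D t).adjugate *ᵥ x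
  have hy : Continuous y := hD.matrix_adjugate.matrix_mulVec continuous_const
  let u : ℝ → m → ℂ := fun t => (D t).det • w + (Complex.I * (t : ℂ)) • (W *ᵥ y t)
  have hu : Continuous u := by
    have h1 := hD.matrix_det
    have h2 : Continuous fun t => W *ᵥ y t := continuous_const.matrix_mulVec hy
    fun_prop
  have hz : Continuous fun t => (Sum.elim (y t) (u t) : n ⊕ m → ℂ) := by
    refine continuous_pi fun i => ?_
    rcases i with i | i
    · exact (continuous_apply i).comp hy
    · exact (continuous_apply i).comp hu
  have h0 := nonneg_of_punctured (continuous_quad M hz) ?_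
  · simpa [y, u, D] using h0
  filter_upwards [eventually_unit A ω] with t ht
  refine freq_unit h _ ht _ _ ?_
  have hDy : y t + (Complex.I * (t : ℂ)) • (V *ᵥ y t) = (D t).det • x := by
    have : D t *ᵥ y t = (D t).det • x := by
      simp only [y]
      rw [mulVec_mulVec, mul_adjugate, smul_mulVec, one_mulVec]
    rw [← this]
    simp only [D, add_mulVec, smul_mulVec, one_mulVec]
  have hBw : B *ᵥ w = (Complex.I * (ω : ℂ)) • x - A *ᵥ x := by rw [← hx]; abel
  have hV : (Complex.I * (ω : ℂ)) • (V *ᵥ y t) - A *ᵥ (V *ᵥ y t) + B *ᵥ (W *ᵥ y t) = y t := by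
    have := congrArg (fun X => X *ᵥ y t) hVW
    simpa [add_mulVec, sub_mulVec, ← mulVec_mulVec, smul_mulVec] using this
  have e : B *ᵥ u t = (Complex.I * (ω : ℂ)) • (y t + (Complex.I * (t : ℂ)) • (V *ᵥ y t))
      - A *ᵥ (y t + (Complex.I * (t : ℂ)) • (V *ᵥ y t)) + (Complex.I * (t : ℂ)) • (B *ᵥ (W *ᵥ y t)) := by
    rw [hDy]
    simp only [u, mulVec_add, mulVec_smul, hBw, smul_sub]
    rw [smul_comm]
  have hB' : B *ᵥ (W *ᵥ y t) = y t - (Complex.I * (ω : ℂ)) • (V *ᵥ y t) + A *ᵥ (V *ᵥ y t) := by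
    rw [← sub_eq_zero, ← sub_eq_zero.2 hV]; abel
  rw [e, hB']
  simp only [mulVec_add, mulVec_smul, smul_sub, smul_add]
  push_cast
  rw [mul_add, add_smul, smul_comm (Complex.I * (ω : ℂ)) (Complex.I * (t : ℂ))]
  abel

lemma freq_inf (h : FreqCond A B M) (w : m → ℂ) :
    0 ≤ star (Sum.elim (0 : n → ℂ) w) ⬝ᵥ (M *ᵥ Sum.elim (0 : n → ℂ) w) := by
  let D : ℝ → Matrix n n ℂ := fun t => 1 - (-Complex.I * (t : ℂ)) • A
  have hD : Continuous D := by fun_prop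
  let y : ℝ → n → ℂ := fun t => (D t).adjugate *ᵥ (B *ᵥ w)
  have hy : Continuous y := hD.matrix_adjugate.matrix_mulVec continuous_const
  have hd := hD.matrix_det
  have hz : Continuous fun t : ℝ => (Sum.elim ((-Complex.I * (t : ℂ)) • y t) ((D t).det • w) : n ⊕ m → ℂ) := by
    have h1 : Continuous fun t : ℝ => (-Complex.I * (t : ℂ)) • y t := by fun_prop
    have h2 : Continuous fun t : ℝ => (D t).det • w := by fun_prop
    refine continuous_pi fun i => ?_
    rcases i with i | i
    · exact (continuous_apply i).comp h1
    · exact (continuous_apply i).comp h2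
  have h0 := nonneg_of_punctured (continuous_quad M hz) ?_
  · simpa [y, D] using h0
  have hdet : ∀ᶠ t in nhds (0 : ℝ), (D t).det ≠ 0 :=
    hd.continuousAt.eventually_ne (by simp [D])
  filter_upwards [nhdsWithin_le_nhds hdet, self_mem_nhdsWithin] with t ht ht0
  have ht0 : (t : ℂ) ≠ 0 := by simpa using ht0
  have hst : (Complex.I * ((t⁻¹ : ℝ) : ℂ)) * (-Complex.I * (t : ℂ)) = 1 := by
    push_cast
    field_simp
    simp
  refine freq_unit h t⁻¹ ?_ _ _ ?_
  · have : (Complex.I * ((t⁻¹ : ℝ) : ℂ)) • (1 : Matrix n n ℂ) - A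
        = (Complex.I * ((t⁻¹ : ℝ) : ℂ)) • D t := by
      simp only [D, smul_sub, smul_smul, hst, one_smul]
    rw [this, isUnit_iff_isUnit_det, det_smul, isUnit_iff_ne_zero]
    refine mul_ne_zero (pow_ne_zero _ (left_ne_zero_of_mul_eq_one hst)) ht
  · rw [smul_smul, hst, one_smul, mulVec_smul, mulVec_smul]
    have : D t *ᵥ y t = (D t).det • (B *ᵥ w) := by
      simp only [y]
      rw [mulVec_mulVec, mul_adjugate, smul_mulVec, one_mulVec]
    rw [← this]
    simp only [D, sub_mulVec, smul_mulVec, one_mulVec]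
    abel



lemma closed_cone_image {E F : Type*} [NormedAddCommGroup E] [NormedSpace ℝ E]
    [FiniteDimensional ℝ E] [NormedAddCommGroup F] [NormedSpace ℝ F] (T : E →L[ℝ] F)
    (S : Set E) (hS : IsClosed S) (hsm : ∀ x ∈ S, ∀ r : ℝ, 0 < r → r • x ∈ S)
    (hinj : ∀ x ∈ S, T x = 0 → x = 0) : IsClosed (T '' S) := by
  have : ProperSpace E := FiniteDimensional.proper ℝ E
  have hcomp : IsCompact (S ∩ Metric.sphere (0 : E) 1) := (isCompact_sphere 0 1).inter_left hS
  obtain ⟨c, hc, hcS⟩ : ∃ c : ℝ, 0 < c ∧ ∀ x ∈ S, c * ‖x‖ ≤ ‖T x‖ := by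
    have key : ∃ c : ℝ, 0 < c ∧ ∀ x ∈ S ∩ Metric.sphere (0 : E) 1, c ≤ ‖T x‖ := by
      rcases (S ∩ Metric.sphere (0 : E) 1).eq_empty_or_nonempty with he | hne
      · exact ⟨1, one_pos, by simp [he]⟩
      · obtain ⟨x0, hx0, hmin⟩ := hcomp.exists_isMinOn hne (T.continuous.norm.continuousOn)
        refine ⟨‖T x0‖, ?_, fun x hx => hmin hx⟩
        rw [norm_pos_iff]
        intro h0
        have := hinj x0 hx0.1 h0
        have h1 := hx0.2
        simp [this] at h1
    obtain ⟨c, hc, h⟩ := key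
    refine ⟨c, hc, fun x hx => ?_⟩
    by_cases h0 : x = 0
    · simp [h0]
    have hn : 0 < ‖x‖ := norm_pos_iff.2 h0
    have := h (‖x‖⁻¹ • x) ⟨hsm x hx _ (inv_pos.2 hn), by simp [norm_smul, hn.ne']⟩
    rw [map_smul, norm_smul, norm_inv, norm_norm, inv_mul_eq_div, le_div_iff₀ hn] at this
    exact this
  refine isClosed_of_closure_subset fun y hy => ?_
  obtain ⟨v, hv, hvy⟩ := mem_closure_iff_seq_limit.1 hy
  choose x hxS hxv using hv
  have hTx : Filter.Tendsto (fun k => T (x k)) Filter.atTop (nhds y) := by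
    simpa only [hxv] using hvy
  obtain ⟨b, hb⟩ := hTx.norm.bddAbove_range
  have hbd : ∀ k, x k ∈ Metric.closedBall (0 : E) (b / c) := fun k => by
    rw [mem_closedBall_zero_iff, le_div_iff₀ hc, mul_comm]
    exact (hcS _ (hxS k)).trans (hb ⟨k, rfl⟩)
  obtain ⟨a, -, φ, hφ, hlim⟩ := (isCompact_closedBall (0 : E) (b / c)).tendsto_subseq hbd
  refine ⟨a, hS.mem_of_tendsto hlim (Filter.Eventually.of_forall fun k => hxS _), ?_⟩
  exact tendsto_nhds_unique ((T.continuous.tendsto a).comp hlim) (hTx.comp hφ.tendsto_atTop)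

/-- the LMI operator -/
def Lop (A : Matrix n n ℂ) (B : Matrix n m ℂ) (Y : Matrix n n ℂ) : Matrix (n ⊕ m) (n ⊕ m) ℂ :=
  fromBlocks (Aᴴ * Y + Y * A) (Y * B) (Bᴴ * Y) 0

lemma Lop_inj {A : Matrix n n ℂ} {B : Matrix n m ℂ}
    (hc : ∀ s : ℂ, ∃ (V : Matrix n n ℂ) (W : Matrix m n ℂ),
      (s • (1 : Matrix n n ℂ) - A) * V + B * W = 1)
    {Y : Matrix n n ℂ} (hY : Yᴴ = Y) (h : (Lop A B Y).PosSemidef) : Y = 0 := by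
  have hB : ∀ w, Y *ᵥ (B *ᵥ w) = 0 := fun w => by
    have h1 : Lop A B Y *ᵥ (Sum.elim 0 w) = 0 := by
      rw [← h.dotProduct_mulVec_zero_iff, Lop, fromBlocks_mulVec]
      simp [dotProduct]
    rw [Lop, fromBlocks_mulVec] at h1
    ext i
    simpa using congrFun h1 (Sum.inl i)
  have hA : ∀ v, Y *ᵥ v = 0 → Y *ᵥ (A *ᵥ v) = 0 := fun v hv => by
    have hv' : star v ᵥ* Y = 0 := by
      have := congrArg star hv
      rwa [star_mulVec, hY, star_zero] at this
    have h1 : Lop A B Y *ᵥ (Sum.elim v 0) = 0 := by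
      rw [← h.dotProduct_mulVec_zero_iff, Lop, fromBlocks_mulVec]
      have : star (Sum.elim v (0 : m → ℂ)) = Sum.elim (star v) 0 := by
        ext i; rcases i with i | i <;> simp
      rw [this, sumElim_dotProduct_sumElim]
      simp [add_mulVec, ← mulVec_mulVec, hv]
      rw [dotProduct_mulVec, hv', zero_dotProduct]
    rw [Lop, fromBlocks_mulVec] at h1
    ext i
    simpa [add_mulVec, ← mulVec_mulVec, hv] using congrFun h1 (Sum.inl i)
  by_contra hne
  let p : Submodule ℂ (n → ℂ) := LinearMap.ker Y.mulVecLin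
  have hp : p ≠ ⊤ := by
    intro ht
    apply hne
    have : Y.mulVecLin = 0 := LinearMap.ker_eq_top.1 ht
    ext i j
    have := congrFun (congrArg (fun f => f (Pi.single j 1)) this) i
    simpa using this
  have hpA : p ≤ p.comap A.mulVecLin := fun v hv => by
    simp only [p, Submodule.mem_comap, LinearMap.mem_ker, mulVecLin_apply] at hv ⊢
    exact hA v hv
  have : Nontrivial ((n → ℂ) ⧸ p) := Submodule.Quotient.nontrivial_iff.2 hp
  let f : Module.End ℂ ((n → ℂ) ⧸ p) := p.mapQ p A.mulVecLin hpA
  obtain ⟨μ, hμ⟩ := Module.End.exists_eigenvalue f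
  obtain ⟨e, he⟩ := hμ.exists_hasEigenvector
  obtain ⟨V, W, hVW⟩ := hc μ
  have hsurj : Function.Surjective (μ • (1 : Module.End ℂ ((n → ℂ) ⧸ p)) - f) := by
    intro q
    obtain ⟨v, rfl⟩ := p.mkQ_surjective q
    refine ⟨p.mkQ (V *ᵥ v), ?_⟩
    have hv : μ • (V *ᵥ v) - A *ᵥ (V *ᵥ v) + B *ᵥ (W *ᵥ v) = v := by
      have := congrArg (fun X => X *ᵥ v) hVW
      simpa [add_mulVec, sub_mulVec, ← mulVec_mulVec, smul_mulVec] using this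
    have hBq : p.mkQ (B *ᵥ (W *ᵥ v)) = 0 := by
      rw [Submodule.mkQ_apply, Submodule.Quotient.mk_eq_zero]
      exact hB _
    conv_rhs => rw [← hv, map_add, hBq, add_zero, map_sub, map_smul]
    rfl
  have hinj := LinearMap.injective_iff_surjective.2 hsurj
  refine he.2 (hinj ?_)
  have := he.apply_eq_smul
  simp [this]

lemma dual_rep {k : Type*} [Fintype k] [DecidableEq k] (f : Matrix k k ℂ →ₗ[ℝ] ℝ) :
    ∃ Z : Matrix k k ℂ, Zᴴ = Z ∧ ∀ M : Matrix k k ℂ, Mᴴ = M →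
      (Z * M).trace = ((2 * f M : ℝ) : ℂ) := by
  let W : Matrix k k ℂ := fun j i => (f (single i j 1) : ℂ) - Complex.I * f (single i j Complex.I)
  have hW : ∀ M, ((W * M).trace).re = f M := fun M => by
    have h1 : ∀ i j, f (single i j (M i j)) = (W j i * M i j).re := fun i j => by
      have : single i j (M i j) = (M i j).re • single i j (1 : ℂ)
          + (M i j).im • single i j Complex.I := by
        rw [smul_single, smul_single, ← single_add]
        congr 1
        simp [Complex.re_add_im]
      rw [this, map_add, map_smul, map_smul]
      simp [W]
      ring
    conv_rhs => rw [matrix_eq_sum_single M]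
    simp only [map_sum, h1, trace, diag_apply, mul_apply, Complex.re_sum]
    rw [Finset.sum_comm]
  refine ⟨W + Wᴴ, by simp [add_comm], fun M hM => ?_⟩
  have h2 : (Wᴴ * M).trace = star ((W * M).trace) := by
    rw [← trace_conjTranspose, conjTranspose_mul, hM, trace_mul_comm]
  rw [Matrix.add_mul, trace_add, h2]
  apply Complex.ext <;> simp [← hW]
  ring

lemma trace_Lop (A : Matrix n n ℂ) (B : Matrix n m ℂ) (Y P : Matrix n n ℂ) (N : Matrix m n ℂ)
    (S : Matrix m m ℂ) (hP : Pᴴ = P) : (fromBlocks P Nᴴ N S * Lop A B Y).trace =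
      (Y * ((A * P + B * N) + (A * P + B * N)ᴴ)).trace := by
  rw [Lop, fromBlocks_multiply]
  have ht : ∀ (X : Matrix n n ℂ) (a b) (T : Matrix m m ℂ),
    (fromBlocks X a b T).trace = X.trace + T.trace := by
    intros; simp [trace]
  rw [ht]
  simp only [Matrix.mul_add, trace_add, conjTranspose_add, conjTranspose_mul, hP,
    Matrix.mul_zero, add_zero]
  have e1 : (P * (Aᴴ * Y)).trace = (Y * (P * Aᴴ)).trace := by
    rw [← Matrix.mul_assoc, trace_mul_comm]
  have e2 : (P * (Y * A)).trace = (Y * (A * P)).trace := by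
    rw [trace_mul_comm, Matrix.mul_assoc]
  have e3 : (Nᴴ * (Bᴴ * Y)).trace = (Y * (Nᴴ * Bᴴ)).trace := by
    rw [← Matrix.mul_assoc, trace_mul_comm]
  have e4 : (N * (Y * B)).trace = (Y * (B * N)).trace := by
    rw [trace_mul_comm, Matrix.mul_assoc]
  rw [e1, e2, e3, e4]
  ring

section
attribute [local instance] Matrix.normedAddCommGroup Matrix.normedSpace

lemma isClosed_psd {k : Type*} [Fintype k] : IsClosed {P : Matrix k k ℂ | P.PosSemidef} := by
  have : {P : Matrix k k ℂ | P.PosSemidef} =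
      {P | Pᴴ = P} ∩ ⋂ x : k → ℂ, {P | 0 ≤ star x ⬝ᵥ (P *ᵥ x)} := by
    ext P
    simp only [Set.mem_ofPred_eq, Set.mem_inter_iff, Set.mem_iInter]
    exact posSemidef_iff_dotProduct_mulVec
  rw [this]
  refine (isClosed_eq continuous_id.matrix_conjTranspose continuous_id).inter
    (isClosed_iInter fun x => isClosed_le continuous_const ?_)
  exact continuous_const.dotProduct (continuous_id.matrix_mulVec continuous_const)

/-- the operator `(P, Y) ↦ P + L Y` -/
noncomputable def Top (A : Matrix n n ℂ) (B : Matrix n m ℂ) :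
    (Matrix (n ⊕ m) (n ⊕ m) ℂ × Matrix n n ℂ) →ₗ[ℝ] Matrix (n ⊕ m) (n ⊕ m) ℂ where
  toFun x := x.1 + Lop A B x.2
  map_add' x y := by
    have : Lop A B (x.2 + y.2) = Lop A B x.2 + Lop A B y.2 := by
      rw [Lop, Lop, Lop, fromBlocks_add]
      congr 1 <;> simp [Matrix.mul_add, Matrix.add_mul] <;> abel
    simp only [Prod.fst_add, Prod.snd_add, this]; abel
  map_smul' r x := by
    have : Lop A B (r • x.2) = r • Lop A B x.2 := by
      rw [Lop, Lop, fromBlocks_smul]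
      congr 1 <;> simp
    simp [this]

lemma exists_lmi {A : Matrix n n ℂ} {B : Matrix n m ℂ}
    (hc : ∀ s : ℂ, ∃ (V : Matrix n n ℂ) (W : Matrix m n ℂ),
      (s • (1 : Matrix n n ℂ) - A) * V + B * W = 1)
    (M : Matrix (n ⊕ m) (n ⊕ m) ℂ) (hM : Mᴴ = M)
    (hdual : ∀ (P : Matrix n n ℂ) (N : Matrix m n ℂ) (S : Matrix m m ℂ),
      (fromBlocks P Nᴴ N S).PosSemidef → (A * P + B * N) + (A * P + B * N)ᴴ = 0 →
      0 ≤ (fromBlocks P Nᴴ N S * M).trace) :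
    ∃ Y : Matrix n n ℂ, Yᴴ = Y ∧ (M + Lop A B Y).PosSemidef := by
  let S : Set (Matrix (n ⊕ m) (n ⊕ m) ℂ × Matrix n n ℂ) := {x | x.1.PosSemidef ∧ x.2ᴴ = x.2}
  let T := (Top A B).toContinuousLinearMap
  have hT : ∀ x, T x = x.1 + Lop A B x.2 := fun x => rfl
  have hneg : ∀ Y, Lop A B (-Y) = - Lop A B Y := fun Y => by
    rw [Lop, Lop, fromBlocks_neg]
    congr 1 <;> simp <;> abel
  have hScl : IsClosed S := by
    refine IsClosed.inter (isClosed_psd.preimage continuous_fst) ?_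
    exact isClosed_eq continuous_snd.matrix_conjTranspose continuous_snd
  have hsm : ∀ x ∈ S, ∀ r : ℝ, 0 < r → r • x ∈ S := fun x hx r hr => by
    refine ⟨hx.1.smul hr.le, ?_⟩
    simp [conjTranspose_smul, hx.2]
  have hadd : ∀ x ∈ S, ∀ y ∈ S, x + y ∈ S := fun x hx y hy =>
    ⟨hx.1.add hy.1, by simp [hx.2, hy.2]⟩
  have hK : IsClosed (T '' S) := by
    refine closed_cone_image T S hScl hsm fun x hx h0 => ?_
    replace h0 : x.1 + Lop A B x.2 = 0 := h0
    have h1 : Lop A B (-x.2) = x.1 := by rw [hneg]; exact (eq_neg_of_add_eq_zero_left h0).symm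
    have h2 : -x.2 = 0 := Lop_inj hc (by simp [hx.2]) (h1 ▸ hx.1)
    have h3 : x.1 = 0 := by rw [← h1, h2]; simp [Lop]
    exact Prod.ext h3 (neg_eq_zero.1 h2)
  have hconv : Convex ℝ S := by
    rw [convex_iff_forall_pos]
    intro x hx y hy a b ha hb _
    exact hadd _ (hsm x hx a ha) _ (hsm y hy b hb)
  have hKc : Convex ℝ (T '' S) := hconv.linear_image T.toLinearMap
  by_cases hmem : M ∈ T '' S
  · obtain ⟨x, hx, hxM⟩ := hmem
    refine ⟨-x.2, by simp [hx.2], ?_⟩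
    rw [hneg, ← hxM, hT, add_neg_cancel_right]
    exact hx.1
  exfalso
  have hlc : LocallyConvexSpace ℝ (Matrix (n ⊕ m) (n ⊕ m) ℂ) :=
    inferInstanceAs (LocallyConvexSpace ℝ (n ⊕ m → n ⊕ m → ℂ))
  obtain ⟨f, u, hfM, hfu⟩ := geometric_hahn_banach_point_closed hKc hK hmem
  have h0S : (0 : Matrix (n ⊕ m) (n ⊕ m) ℂ × Matrix n n ℂ) ∈ S := ⟨.zero, by simp⟩
  have hu : u < 0 := by simpa using hfu _ ⟨0, h0S, rfl⟩
  have hpos : ∀ x ∈ S, 0 ≤ f (T x) := fun x hx => by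
    by_contra hlt
    push Not at hlt
    have := hfu _ ⟨_, hsm x hx (u / f (T x)) (div_pos_of_neg_of_neg hu hlt), rfl⟩
    rw [map_smul, map_smul, smul_eq_mul, div_mul_cancel₀ _ hlt.ne] at this
    exact lt_irrefl _ this
  obtain ⟨Z, hZh, hZ⟩ := dual_rep f.toLinearMap
  have hZpsd : Z.PosSemidef := by
    rw [posSemidef_iff_dotProduct_mulVec]
    refine ⟨hZh, fun x => ?_⟩
    have hp := posSemidef_vecMulVec_self_star x
    have h1 := hZ _ hp.1
    have h2 : 0 ≤ f (vecMulVec x (star x)) := by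
      have := hpos (vecMulVec x (star x), 0) ⟨hp, by simp⟩
      simpa [hT, Lop] using this
    have h3 : star x ⬝ᵥ (Z *ᵥ x) = (Z * vecMulVec x (star x)).trace := by
      rw [mul_vecMulVec, trace_vecMulVec, dotProduct_comm]
    rw [h3, h1]
    exact Complex.zero_le_real.2 (by simpa using h2)
  have hN : Z.toBlocks₁₂ = (Z.toBlocks₂₁)ᴴ := by
    ext i j
    exact (congrFun (congrFun hZh (Sum.inl i)) (Sum.inr j)).symm
  have hZb : fromBlocks Z.toBlocks₁₁ (Z.toBlocks₂₁)ᴴ Z.toBlocks₂₁ Z.toBlocks₂₂ = Z := by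
    rw [← hN, fromBlocks_toBlocks]
  have hP : Z.toBlocks₁₁ᴴ = Z.toBlocks₁₁ := by
    ext i j
    exact congrFun (congrFun hZh (Sum.inl i)) (Sum.inl j)
  have hLf : ∀ Y : Matrix n n ℂ, Yᴴ = Y → f (Lop A B Y) = 0 := fun Y hY => by
    have h1 := hpos (0, Y) ⟨.zero, hY⟩
    have h2 := hpos (0, -Y) ⟨.zero, by simp [hY]⟩
    simp only [hT, hneg, zero_add, map_neg] at h1 h2
    linarith
  have hLh : ∀ Y : Matrix n n ℂ, Yᴴ = Y → (Lop A B Y)ᴴ = Lop A B Y := fun Y hY => by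
    rw [Lop, fromBlocks_conjTranspose]
    congr 1 <;> simp [hY, add_comm]
  have hE : (A * Z.toBlocks₁₁ + B * Z.toBlocks₂₁) + (A * Z.toBlocks₁₁ + B * Z.toBlocks₂₁)ᴴ = 0 := by
    set E := (A * Z.toBlocks₁₁ + B * Z.toBlocks₂₁) + (A * Z.toBlocks₁₁ + B * Z.toBlocks₂₁)ᴴ with hEd
    have hEh : Eᴴ = E := by
      rw [hEd, conjTranspose_add, conjTranspose_conjTranspose, add_comm]
    have h1 := trace_Lop A B E Z.toBlocks₁₁ Z.toBlocks₂₁ Z.toBlocks₂₂ hP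
    rw [hZb, hZ _ (hLh E hEh), ← hEd] at h1
    have h2 : f.toLinearMap (Lop A B E) = 0 := hLf E hEh
    rw [h2] at h1
    rw [← trace_conjTranspose_mul_self_eq_zero_iff, hEh, ← h1]
    simp
  have hfin := hdual _ _ _ (hZb ▸ hZpsd) hE
  rw [hZb, hZ M hM] at hfin
  have h4 : 0 ≤ 2 * f M := Complex.zero_le_real.1 hfin
  linarith

end

end

lemma lmi_eq {n m : ℕ} (A Q Y : Matrix (Fin n) (Fin n) ℂ) (B C : Matrix (Fin n) (Fin m) ℂ)
    (R : Matrix (Fin m) (Fin m) ℂ) :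
    fromBlocks (Aᴴ * Y + Y * A + Q) (Y * B + C) (Bᴴ * Y + Cᴴ) R =
      fromBlocks Q C Cᴴ R + Lop A B Y := by
  rw [Lop, fromBlocks_add]
  congr 1
  · abel
  · abel
  · abel
  · simp

lemma ctrb_inverse {n m : ℕ} {A : Matrix (Fin n) (Fin n) ℂ} {B : Matrix (Fin n) (Fin m) ℂ} {s : ℂ}
    (h : (fromCols (s • (1 : Matrix (Fin n) (Fin n) ℂ) - A) B).rank = n) :
    ∃ (V : Matrix (Fin n) (Fin n) ℂ) (W : Matrix (Fin m) (Fin n) ℂ),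
      (s • (1 : Matrix (Fin n) (Fin n) ℂ) - A) * V + B * W = 1 := by
  have hs : Function.Surjective (fromCols (s • (1 : Matrix (Fin n) (Fin n) ℂ) - A) B).mulVec := by
    have : LinearMap.range (fromCols (s • (1 : Matrix (Fin n) (Fin n) ℂ) - A) B).mulVecLin = ⊤ := by
      apply Submodule.eq_top_of_finrank_eq
      rw [Module.finrank_fin_fun]
      exact h
    exact LinearMap.range_eq_top.1 this
  obtain ⟨J, hJ⟩ := mulVec_surjective_iff_exists_right_inverse.1 hs
  refine ⟨J.toRows₁, J.toRows₂, ?_⟩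
  rw [← fromCols_mul_fromRows, fromRows_toRows, hJ]

lemma popov_Lop {n m : ℕ} (A Y : Matrix (Fin n) (Fin n) ℂ) (B : Matrix (Fin n) (Fin m) ℂ) (ω : ℝ)
    (X : Matrix (Fin n) (Fin m) ℂ) (hX : A * X + B = (Complex.I * (ω : ℂ)) • X) :
    (fromRows X (1 : Matrix (Fin m) (Fin m) ℂ))ᴴ * Lop A B Y * fromRows X (1 : Matrix (Fin m) (Fin m) ℂ) = 0 := by
  rw [conjTranspose_fromRows_eq_fromCols_conjTranspose, Lop, Matrix.mul_assoc,
    fromBlocks_mul_fromRows, fromCols_mul_fromRows]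
  have h1 : Xᴴ * ((Aᴴ * Y + Y * A) * X + Y * B * (1 : Matrix (Fin m) (Fin m) ℂ)) +
      (1 : Matrix (Fin m) (Fin m) ℂ)ᴴ * (Bᴴ * Y * X + 0 * (1 : Matrix (Fin m) (Fin m) ℂ))
      = (A * X + B)ᴴ * Y * X + Xᴴ * Y * (A * X + B) := by
    simp only [conjTranspose_add, conjTranspose_mul, conjTranspose_one, Matrix.mul_add,
      Matrix.add_mul, Matrix.mul_assoc, Matrix.mul_one, Matrix.one_mul, Matrix.zero_mul, add_zero]
    abel
  rw [h1, hX]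
  simp [conjTranspose_smul]

end LureAux

/-- For a controllable pair `(A, B)`, solvability of the Lur'e equations is
equivalent to feasibility of the associated LMI, and to positive semidefiniteness
of the Popov function `Φ(iω)` for all real `ω` with `iω ∉ σ(A)`. -/
theorem lure_solvability_criteria
    (n m : ℕ) (hn : 0 < n) (hm : 0 < m)
    (A Q : Matrix (Fin n) (Fin n) ℂ) (B C : Matrix (Fin n) (Fin m) ℂ)
    (R : Matrix (Fin m) (Fin m) ℂ) (hQ : Qᴴ = Q) (hR : Rᴴ = R)
    (hctrb : ∀ s : ℂ,
      (fromCols (s • (1 : Matrix (Fin n) (Fin n) ℂ) - A) B).rank = n) :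
    ((∃ (p : ℕ) (X : Matrix (Fin n) (Fin n) ℂ) (K : Matrix (Fin p) (Fin n) ℂ)
        (L : Matrix (Fin p) (Fin m) ℂ), Xᴴ = X ∧
          Aᴴ * X + X * A + Q = Kᴴ * K ∧ X * B + C = Kᴴ * L ∧ R = Lᴴ * L) ↔
      (∃ Y : Matrix (Fin n) (Fin n) ℂ, Yᴴ = Y ∧
        (fromBlocks (Aᴴ * Y + Y * A + Q) (Y * B + C) (Bᴴ * Y + Cᴴ) R).PosSemidef)) ∧
    ((∃ Y : Matrix (Fin n) (Fin n) ℂ, Yᴴ = Y ∧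
        (fromBlocks (Aᴴ * Y + Y * A + Q) (Y * B + C) (Bᴴ * Y + Cᴴ) R).PosSemidef) ↔
      (∀ ω : ℝ,
        IsUnit ((Complex.I * (ω : ℂ)) • (1 : Matrix (Fin n) (Fin n) ℂ) - A) →
        ((fromRows (((Complex.I * (ω : ℂ)) • (1 : Matrix (Fin n) (Fin n) ℂ) - A)⁻¹ * B)
              (1 : Matrix (Fin m) (Fin m) ℂ))ᴴ *
            fromBlocks Q C Cᴴ R *
            fromRows (((Complex.I * (ω : ℂ)) • (1 : Matrix (Fin n) (Fin n) ℂ) - A)⁻¹ * B)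
              (1 : Matrix (Fin m) (Fin m) ℂ)).PosSemidef)) := by
  have hc : ∀ s : ℂ, ∃ (V : Matrix (Fin n) (Fin n) ℂ) (W : Matrix (Fin m) (Fin n) ℂ),
      (s • (1 : Matrix (Fin n) (Fin n) ℂ) - A) * V + B * W = 1 :=
    fun s => LureAux.ctrb_inverse (hctrb s)
  refine ⟨⟨?_, ?_⟩, ⟨?_, ?_⟩⟩
  · rintro ⟨p, X, K, L, hX, h1, h2, h3⟩
    refine ⟨X, hX, ?_⟩
    have h4 : Bᴴ * X + Cᴴ = Lᴴ * K := by
      have := congrArg conjTranspose h2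
      simpa [conjTranspose_mul, hX] using this
    rw [h1, h2, h3, h4]
    have := posSemidef_conjTranspose_mul_self (fromCols K L)
    rwa [conjTranspose_fromCols_eq_fromRows_conjTranspose, fromRows_mul_fromCols] at this
  · rintro ⟨Y, hY, hM⟩
    obtain ⟨E, -, hE, -, hEE, -⟩ := LureAux.psd_root hM
    let e : Fin (n + m) ≃ Fin n ⊕ Fin m := finSumFinEquiv.symm
    let D : Matrix (Fin (n + m)) (Fin n ⊕ Fin m) ℂ := E.submatrix e id
    have hD : Dᴴ * D = E * E := by
      conv_rhs => rw [← hE]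
      simp only [D, conjTranspose_submatrix]
      rw [submatrix_mul_equiv, hE]
      simp
    have hb : fromBlocks (D.toCols₁ᴴ * D.toCols₁) (D.toCols₁ᴴ * D.toCols₂)
        (D.toCols₂ᴴ * D.toCols₁) (D.toCols₂ᴴ * D.toCols₂) =
        fromBlocks (Aᴴ * Y + Y * A + Q) (Y * B + C) (Bᴴ * Y + Cᴴ) R := by
      rw [← fromRows_mul_fromCols, ← conjTranspose_fromCols_eq_fromRows_conjTranspose,
        fromCols_toCols, hD, hEE]
    rw [fromBlocks_inj] at hb
    exact ⟨n + m, Y, D.toCols₁, D.toCols₂, hY, hb.1.symm, hb.2.1.symm, hb.2.2.2.symm⟩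
  · rintro ⟨Y, hY, hM⟩ ω hu
    rw [LureAux.lmi_eq] at hM
    set X := ((Complex.I * (ω : ℂ)) • (1 : Matrix (Fin n) (Fin n) ℂ) - A)⁻¹ * B with hXd
    have hX : A * X + B = (Complex.I * (ω : ℂ)) • X := by
      have h1 : ((Complex.I * (ω : ℂ)) • (1 : Matrix (Fin n) (Fin n) ℂ) - A) * X = B := by
        rw [hXd, ← Matrix.mul_assoc, mul_nonsing_inv _ ((isUnit_iff_isUnit_det _).1 hu),
          Matrix.one_mul]
      rw [Matrix.sub_mul, Matrix.smul_mul, Matrix.one_mul] at h1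
      rw [← h1]; abel
    have := hM.conjTranspose_mul_mul_same (fromRows X (1 : Matrix (Fin m) (Fin m) ℂ))
    rwa [Matrix.mul_add, Matrix.add_mul, LureAux.popov_Lop A Y B ω X hX, add_zero] at this
  · intro h
    have hf : LureAux.FreqCond A B (fromBlocks Q C Cᴴ R) := h
    have hRp : R.PosSemidef := by
      rw [posSemidef_iff_dotProduct_mulVec]
      refine ⟨hR, fun w => ?_⟩
      have := LureAux.freq_inf hf w
      rw [fromBlocks_mulVec] at this
      simpa [dotProduct] using this
    obtain ⟨Y, hY, hM⟩ := LureAux.exists_lmi hc (fromBlocks Q C Cᴴ R)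
      (by rw [fromBlocks_conjTranspose, hQ, hR, conjTranspose_conjTranspose])
      (fun P N S hZ hE => LureAux.key A B P N S hZ hE Q C R hRp
        (fun ω x w hx => LureAux.freq_all hf ω (hc _) x w hx))
    exact ⟨Y, hY, by rw [LureAux.lmi_eq]; exact hM⟩
end

section
/- Let n, m be positive integers, A, Q ∈ ℂ^{n×n} with Q = Q*, B, C ∈ ℂ^{n×m}, R = R* ∈ ℂ^{m×m}. Assume the pair (A, B) is stabilizable, i.e. rank [sI − A, B] = n for all s in the closed right half-plane, and assume S_LMI = {Y = Y* : M(Y) ≥ 0} is nonempty. Then there exist p ∈ ℕ, a Hermitian X₊ ∈ ℂ^{n×n}, K ∈ ℂ^{p×n} and L ∈ ℂ^{p×m} such that (X₊, K, L) satisfies the Lur'e equations A*X₊ + X₊A + Q = K*K, X₊B + C = K*L, R = L*L, and X₊ is maximal: X₊ − Y is positive semidefinite for every Y ∈ S_LMI. -/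
open Matrix ComplexOrder
open Filter Topology

/-- Hurwitz stability. -/
def LStab {n : ℕ} (A : Matrix (Fin n) (Fin n) ℂ) : Prop :=
  ∀ (s : ℂ) (v : Fin n → ℂ), v ≠ 0 → A *ᵥ v = s • v → s.re < 0

section norms
attribute [local instance] Matrix.linftyOpNormedRing Matrix.linftyOpNormedAlgebra

theorem lure_pow_tendsto {n : ℕ} (D : Matrix (Fin n) (Fin n) ℂ)
    (h : ∀ (s : ℂ) (v : Fin n → ℂ), v ≠ 0 → D *ᵥ v = s • v → ‖s‖ < 1) :
    Tendsto (fun k => D ^ k) atTop (𝓝 0) := by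
  rcases Nat.eq_zero_or_pos n with rfl | hn
  · have : (fun k => D ^ k) = fun _ => 0 := by
      funext k; exact Subsingleton.elim _ _
    rw [this]; exact tendsto_const_nhds
  have : Nonempty (Fin n) := ⟨⟨0, hn⟩⟩
  have hρ : spectralRadius ℂ D < (1 : NNReal) := by
    apply spectrum.spectralRadius_lt_of_forall_lt_of_nonempty (spectrum.nonempty D)
    intro s hs
    rw [spectrum.mem_iff, Matrix.isUnit_iff_isUnit_det, isUnit_iff_ne_zero, not_not,
      ← Matrix.exists_mulVec_eq_zero_iff] at hs
    obtain ⟨v, hv, hv2⟩ := hs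
    have := h s v hv (by
      rw [Matrix.sub_mulVec, sub_eq_zero, Algebra.algebraMap_eq_smul_one, Matrix.smul_mulVec,
        Matrix.one_mulVec] at hv2
      exact hv2.symm)
    exact_mod_cast this
  obtain ⟨r, hr1, hr2⟩ := ENNReal.lt_iff_exists_nnreal_btwn.1 hρ
  have hr2' : r < 1 := by exact_mod_cast hr2
  have hg := spectrum.pow_nnnorm_pow_one_div_tendsto_nhds_spectralRadius D
  have hev := hg.eventually (gt_mem_nhds hr1)
  refine squeeze_zero_norm' (a := fun k => (r : ℝ) ^ k) ?_
    (tendsto_pow_atTop_nhds_zero_of_lt_one r.2 hr2')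
  filter_upwards [hev, eventually_gt_atTop 0] with k hk hk0
  have hk' : (0:ℝ) < k := by exact_mod_cast hk0
  have h1 := ENNReal.rpow_le_rpow hk.le hk'.le
  rw [← ENNReal.rpow_mul, one_div, inv_mul_cancel₀ hk'.ne', ENNReal.rpow_one,
    ENNReal.rpow_natCast] at h1
  have h2 : ‖D ^ k‖₊ ≤ r ^ k := by exact_mod_cast h1
  exact_mod_cast h2

theorem lure_exists_shift {n : ℕ} (A : Matrix (Fin n) (Fin n) ℂ) :
    ∃ a : ℝ, 0 < a ∧ ∀ (s : ℂ) (v : Fin n → ℂ), v ≠ 0 → A *ᵥ v = s • v → -a < s.re := by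
  refine ⟨‖A‖ + 1, by positivity, ?_⟩
  intro s v hv hs
  have h1 : ‖A *ᵥ v‖ ≤ ‖A‖ * ‖v‖ := Matrix.linfty_opNorm_mulVec A v
  rw [hs, norm_smul] at h1
  have h2 : ‖s‖ ≤ ‖A‖ := le_of_mul_le_mul_right h1 (norm_pos_iff.2 hv)
  have := Complex.abs_re_le_norm s
  have := neg_abs_le s.re
  linarith
end norms

theorem LStab.isUnit {n : ℕ} {A : Matrix (Fin n) (Fin n) ℂ} (hA : LStab A) {s : ℂ}
    (hs : 0 ≤ s.re) : IsUnit (s • 1 - A).det := by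
  rw [isUnit_iff_ne_zero]
  intro h
  obtain ⟨v, hv, hv2⟩ := Matrix.exists_mulVec_eq_zero_iff.2 h
  rw [Matrix.sub_mulVec, sub_eq_zero, Matrix.smul_mulVec, Matrix.one_mulVec] at hv2
  exact absurd (hA s v hv hv2.symm) (not_lt.2 hs)

theorem lstab_of_det {n : ℕ} {A : Matrix (Fin n) (Fin n) ℂ}
    (h : ∀ s : ℂ, 0 ≤ s.re → (s • 1 - A).det ≠ 0) : LStab A := by
  intro s v hv hs
  by_contra hc
  exact h s (not_lt.1 hc) (Matrix.exists_mulVec_eq_zero_iff.1 ⟨v, hv, by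
    rw [Matrix.sub_mulVec, sub_eq_zero, Matrix.smul_mulVec, Matrix.one_mulVec, hs]⟩)

theorem LStab.conjTranspose {n : ℕ} {A : Matrix (Fin n) (Fin n) ℂ} (hA : LStab A) : LStab Aᴴ := by
  apply lstab_of_det
  intro s hs h
  have h1 := (hA.isUnit (s := star s) (by simpa using hs)).ne_zero
  apply h1
  have : (star s • 1 - A) = (s • 1 - Aᴴ)ᴴ := by
    simp
  rw [this, Matrix.det_conjTranspose, h, star_zero]

/-- Cayley transform. -/
theorem LStab.cayley {n : ℕ} {A : Matrix (Fin n) (Fin n) ℂ} (hA : LStab A) :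
    ∃ D E : Matrix (Fin n) (Fin n) ℂ, Tendsto (fun k => D ^ k) atTop (𝓝 0) ∧
      ∀ H W : Matrix (Fin n) (Fin n) ℂ, Aᴴ * H + H * A = -W →
        H = Dᴴ * H * D + Eᴴ * ((2:ℂ) • W) * E := by
  have hu : IsUnit (1 - A).det := by simpa using hA.isUnit (s := 1) (by simp)
  set E := (1 - A)⁻¹ with hE
  have hE1 : (1 - A) * E = 1 := Matrix.mul_nonsing_inv _ hu
  have hE2 : E * (1 - A) = 1 := Matrix.nonsing_inv_mul _ hu
  refine ⟨(1 + A) * E, E, ?_, ?_⟩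
  · apply lure_pow_tendsto
    intro s v hv hs
    set w := E *ᵥ v with hw
    have hvw : v = (1 - A) *ᵥ w := by
      rw [hw, Matrix.mulVec_mulVec, hE1, Matrix.one_mulVec]
    have hw0 : w ≠ 0 := by
      intro h0; apply hv; rw [hvw, h0, Matrix.mulVec_zero]
    rw [← Matrix.mulVec_mulVec, ← hw, hvw, Matrix.add_mulVec, Matrix.sub_mulVec,
      Matrix.one_mulVec] at hs
    have h1 : (1 + s) • (A *ᵥ w) = (s - 1) • w := by
      have : (1 + s) • (A *ᵥ w) - (s - 1) • w = (w + A *ᵥ w) - s • (w - A *ᵥ w) := by module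
      rw [← sub_eq_zero, this, hs, sub_self]
    have hs1 : 1 + s ≠ 0 := by
      intro h0
      rw [h0, zero_smul] at h1
      have := (smul_eq_zero.1 h1.symm).resolve_right hw0
      have h2 : (2 : ℂ) = 0 := by linear_combination h0 - this
      norm_num at h2
    have h2 : A *ᵥ w = ((s - 1) / (1 + s)) • w := by
      rw [div_eq_inv_mul, mul_smul, ← h1, smul_smul, inv_mul_cancel₀ hs1, one_smul]
    have h3 := hA _ w hw0 h2
    set t := (s - 1) / (1 + s) with ht
    have h4 : ((s - 1) * star (1 + s)).re < 0 := by
      have : (s - 1) * star (1 + s) = t * ((Complex.normSq (1 + s) : ℝ) : ℂ) := by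
        rw [← Complex.mul_conj, ht]
        field_simp
        simp
      rw [this, Complex.re_mul_ofReal]
      exact mul_neg_of_neg_of_pos h3 (Complex.normSq_pos.2 hs1)
    have h5 : ‖s‖ ^ 2 < 1 := by
      rw [Complex.sq_norm, Complex.normSq_apply]
      simp at h4
      nlinarith
    nlinarith [norm_nonneg s]
  · intro H W hW
    have key : (1 - A)ᴴ * H * (1 - A) = (1 + A)ᴴ * H * (1 + A) + (2:ℂ) • W := by
      have hW' : W = -(Aᴴ * H + H * A) := by rw [hW, neg_neg]
      rw [hW', two_smul]
      simp only [Matrix.conjTranspose_add, Matrix.conjTranspose_sub, Matrix.conjTranspose_one]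
      noncomm_ring
    have hE3 : Eᴴ * (1 - A)ᴴ = 1 := by
      rw [← Matrix.conjTranspose_mul, hE1, Matrix.conjTranspose_one]
    calc H = (Eᴴ * (1 - A)ᴴ) * H * ((1 - A) * E) := by rw [hE1, hE3]; simp
      _ = Eᴴ * ((1 - A)ᴴ * H * (1 - A)) * E := by simp only [Matrix.mul_assoc]
      _ = _ := by
        rw [key, Matrix.conjTranspose_mul]
        simp only [Matrix.mul_assoc, Matrix.mul_add, Matrix.add_mul]

theorem lure_stein_tendsto {n : ℕ} {D : Matrix (Fin n) (Fin n) ℂ}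
    (hD : Tendsto (fun k => D ^ k) atTop (𝓝 0)) (H : Matrix (Fin n) (Fin n) ℂ) :
    Tendsto (fun k => (D ^ k)ᴴ * H * D ^ k) atTop (𝓝 0) := by
  have hc : Continuous (fun M : Matrix (Fin n) (Fin n) ℂ => Mᴴ * H * M) := by fun_prop
  have := (hc.tendsto 0).comp hD
  simpa [Function.comp_def] using this

theorem lure_isClosed_posSemidef {ι : Type*} [Fintype ι] :
    IsClosed {M : Matrix ι ι ℂ | M.PosSemidef} := by
  have : {M : Matrix ι ι ℂ | M.PosSemidef} =
      {M | Mᴴ = M} ∩ ⋂ x : ι → ℂ, {M | 0 ≤ star x ⬝ᵥ (M *ᵥ x)} := by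
    ext M
    simp only [Set.mem_ofPred_eq, Matrix.posSemidef_iff_dotProduct_mulVec, Set.mem_inter_iff,
      Set.mem_iInter, Matrix.IsHermitian]
  rw [this]
  refine IsClosed.inter (isClosed_eq (by fun_prop) (by fun_prop)) (isClosed_iInter fun x => ?_)
  exact isClosed_le (by fun_prop) (by fun_prop)

theorem LStab.posSemidef {n : ℕ} {A H W : Matrix (Fin n) (Fin n) ℂ} (hA : LStab A)
    (hW : W.PosSemidef) (h : Aᴴ * H + H * A = -W) : H.PosSemidef := by
  obtain ⟨D, E, hD, hDE⟩ := hA.cayley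
  have h1 := hDE H W h
  have hpsd : (Eᴴ * ((2:ℂ) • W) * E).PosSemidef :=
    (hW.smul (by norm_num : (0:ℂ) ≤ 2)).conjTranspose_mul_mul_same E
  set V := Eᴴ * ((2:ℂ) • W) * E
  have hk : ∀ k : ℕ, (H - (D ^ k)ᴴ * H * D ^ k).PosSemidef := by
    intro k
    induction k with
    | zero => simpa using Matrix.PosSemidef.zero
    | succ k ih =>
      have : H - (D ^ (k+1))ᴴ * H * D ^ (k+1) =
          (H - (D ^ k)ᴴ * H * D ^ k) + (D ^ k)ᴴ * V * D ^ k := by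
        have h2 : (D ^ k)ᴴ * H * D ^ k = (D ^ k)ᴴ * (Dᴴ * H * D + V) * D ^ k := by rw [← h1]
        rw [h2, pow_succ' D k, Matrix.conjTranspose_mul]
        simp only [Matrix.mul_assoc, Matrix.mul_add, Matrix.add_mul]
        abel
      rw [this]
      exact ih.add (hpsd.conjTranspose_mul_mul_same _)
  have hlim := (tendsto_const_nhds (x := H)).sub (lure_stein_tendsto hD H)
  rw [sub_zero] at hlim
  exact lure_isClosed_posSemidef.mem_of_tendsto hlim (Eventually.of_forall hk)

theorem LStab.inj {n : ℕ} {A H : Matrix (Fin n) (Fin n) ℂ} (hA : LStab A)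
    (h : Aᴴ * H + H * A = 0) : H = 0 := by
  obtain ⟨D, E, hD, hDE⟩ := hA.cayley
  have h1 := hDE H 0 (by simpa using h)
  simp at h1
  have hk : ∀ k : ℕ, (D ^ k)ᴴ * H * D ^ k = H := by
    intro k
    induction k with
    | zero => simp
    | succ k ih =>
      calc _ = (D ^ k)ᴴ * (Dᴴ * H * D) * D ^ k := by
            rw [pow_succ' D k, Matrix.conjTranspose_mul]; simp only [Matrix.mul_assoc]
        _ = H := by rw [← h1, ih]
  have := lure_stein_tendsto hD H
  simp only [hk] at this
  exact tendsto_nhds_unique tendsto_const_nhds this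

theorem LStab.solve {n : ℕ} {A : Matrix (Fin n) (Fin n) ℂ} (hA : LStab A)
    (W : Matrix (Fin n) (Fin n) ℂ) (hW : Wᴴ = W) :
    ∃ H : Matrix (Fin n) (Fin n) ℂ, Hᴴ = H ∧ Aᴴ * H + H * A = -W := by
  let T : Matrix (Fin n) (Fin n) ℂ →ₗ[ℂ] Matrix (Fin n) (Fin n) ℂ :=
    LinearMap.mulLeft ℂ Aᴴ + LinearMap.mulRight ℂ A
  have hT : ∀ H, T H = Aᴴ * H + H * A := fun H => rfl
  have hinj : Function.Injective T := by
    rw [injective_iff_map_eq_zero]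
    intro H h; exact hA.inj h
  obtain ⟨H, hH⟩ := (LinearMap.injective_iff_surjective.1 hinj) (-W)
  refine ⟨H, ?_, hH⟩
  apply hinj
  rw [hH, hT]
  have := congrArg Matrix.conjTranspose hH
  rw [hT] at this
  simp only [Matrix.conjTranspose_add, Matrix.conjTranspose_mul, Matrix.conjTranspose_conjTranspose,
    Matrix.conjTranspose_neg, hW] at this
  rw [← this, add_comm]

theorem lure_factor {n m : ℕ} (X : Matrix (Fin n) (Fin n) ℂ) (N : Matrix (Fin m) (Fin n) ℂ)
    (h : ∀ w, X *ᵥ w = 0 → N *ᵥ w = 0) : ∃ F : Matrix (Fin m) (Fin n) ℂ, F * X = N := by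
  set f := Matrix.toLin' X with hf
  obtain ⟨g, hg⟩ := f.rangeRestrict.exists_rightInverse_of_surjective f.range_rangeRestrict
  obtain ⟨k, hk⟩ := LinearMap.exists_extend ((Matrix.toLin' N) ∘ₗ g)
  refine ⟨LinearMap.toMatrix' k, ?_⟩
  apply Matrix.toLin'.injective
  rw [Matrix.toLin'_mul, Matrix.toLin'_toMatrix', ← hf]
  apply LinearMap.ext
  intro v
  have h1 : k (f v) = Matrix.toLin' N (g (f.rangeRestrict v)) :=
    LinearMap.congr_fun hk (f.rangeRestrict v)
  have h2 : f.rangeRestrict (g (f.rangeRestrict v)) = f.rangeRestrict v :=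
    LinearMap.congr_fun hg _
  have h3 : f (g (f.rangeRestrict v)) = f v := congrArg Subtype.val h2
  have h4 := h (g (f.rangeRestrict v) - v) (by
    have : f (g (f.rangeRestrict v) - v) = 0 := by rw [map_sub, h3, sub_self]
    simpa [hf] using this)
  rw [LinearMap.comp_apply, h1, Matrix.toLin'_apply, Matrix.toLin'_apply, ← sub_eq_zero,
    ← Matrix.mulVec_sub, h4]

theorem lure_quad {n : ℕ} (A D : Matrix (Fin n) (Fin n) ℂ) (v : Fin n → ℂ) (s : ℂ)
    (h : A *ᵥ v = s • v) :
    star v ⬝ᵥ ((Aᴴ * D + D * A) *ᵥ v) = ((2 * s.re : ℝ) : ℂ) * (star v ⬝ᵥ (D *ᵥ v)) := by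
  have h1 : star v ⬝ᵥ ((Aᴴ * D) *ᵥ v) = star s * (star v ⬝ᵥ (D *ᵥ v)) := by
    rw [← Matrix.mulVec_mulVec, Matrix.dotProduct_mulVec, ← Matrix.star_mulVec, h, star_smul,
      smul_dotProduct, smul_eq_mul]
  have h2 : star v ⬝ᵥ ((D * A) *ᵥ v) = s * (star v ⬝ᵥ (D *ᵥ v)) := by
    rw [← Matrix.mulVec_mulVec, h, Matrix.mulVec_smul, dotProduct_smul, smul_eq_mul]
  rw [Matrix.add_mulVec, dotProduct_add, h1, h2, ← add_mul]
  congr 1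
  have := Complex.add_conj s
  rw [← this, add_comm]; rfl

theorem lure_rank_left {n m : ℕ} (N : Matrix (Fin n) (Fin n ⊕ Fin m) ℂ) (h : N.rank = n)
    (w : Fin n → ℂ) (hw : w ᵥ* N = 0) : w = 0 := by
  have hli : LinearIndependent ℂ N.row := by
    rw [linearIndependent_iff_card_eq_finrank_span, Fintype.card_fin, Set.finrank,
      ← Matrix.rank_eq_finrank_span_row, h]
  have := Matrix.vecMul_injective_iff.2 hli
  exact this (by simpa using hw)

theorem lure_stabilize {n m : ℕ} (A : Matrix (Fin n) (Fin n) ℂ) (B : Matrix (Fin n) (Fin m) ℂ)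
    (hstab : ∀ s : ℂ, 0 ≤ s.re →
      (fromCols (s • (1 : Matrix (Fin n) (Fin n) ℂ) - A) B).rank = n) :
    ∃ F : Matrix (Fin m) (Fin n) ℂ, LStab (A + B * F) := by
  obtain ⟨a, ha, hA⟩ := lure_exists_shift A
  have hS : LStab (-(A + (a:ℂ) • 1)) := by
    intro s v hv hs
    have : A *ᵥ v = (-s - (a:ℂ)) • v := by
      rw [Matrix.neg_mulVec, Matrix.add_mulVec, Matrix.smul_mulVec, Matrix.one_mulVec] at hs
      rw [sub_smul, neg_smul, ← hs]; abel
    have := hA _ v hv this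
    simp at this
    exact this
  obtain ⟨X, hXh, hX⟩ := hS.conjTranspose.solve (B * Bᴴ) (by simp)
  have hXp : X.PosSemidef :=
    hS.conjTranspose.posSemidef (Matrix.posSemidef_self_mul_conjTranspose B) hX
  have hX2 : A * X + X * Aᴴ = B * Bᴴ - ((2 * a : ℝ) : ℂ) • X := by
    have h1 : B * Bᴴ = (A + (a:ℂ) • 1) * X + X * (A + (a:ℂ) • 1)ᴴ := by
      rw [← neg_inj, ← hX]
      simp only [Matrix.conjTranspose_neg, Matrix.conjTranspose_conjTranspose, Matrix.neg_mul,
        Matrix.mul_neg]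
      abel
    rw [h1]
    simp [Matrix.add_mul, Matrix.mul_add]
    module
  have hker : ∀ w, X *ᵥ w = 0 → (-Bᴴ) *ᵥ w = 0 := by
    intro w hw
    have h1 : star w ⬝ᵥ ((B * Bᴴ) *ᵥ w) = 0 := by
      have h2 : B * Bᴴ = A * X + X * Aᴴ + ((2 * a : ℝ) : ℂ) • X := by rw [hX2]; abel
      have h3 : star w ᵥ* X = 0 := by
        rw [← hXh, ← Matrix.star_mulVec, hw, star_zero]
      rw [h2, Matrix.add_mulVec, Matrix.add_mulVec, Matrix.smul_mulVec, ← Matrix.mulVec_mulVec,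
        ← Matrix.mulVec_mulVec, hw, dotProduct_add, dotProduct_add, Matrix.dotProduct_mulVec _ X, h3]
      simp
    rw [← Matrix.mulVec_mulVec, Matrix.dotProduct_mulVec] at h1
    have h4 : star w ᵥ* B = star (Bᴴ *ᵥ w) := by
      rw [Matrix.star_mulVec, Matrix.conjTranspose_conjTranspose]
    rw [h4, dotProduct_star_self_eq_zero] at h1
    rw [Matrix.neg_mulVec, h1, neg_zero]
  obtain ⟨F, hF⟩ := lure_factor X (-Bᴴ) hker
  refine ⟨F, ?_⟩
  rw [← Matrix.conjTranspose_conjTranspose (A + B * F)]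
  apply LStab.conjTranspose
  intro s w hw hs
  have hF' : X * Fᴴ = -B := by
    have := congrArg Matrix.conjTranspose hF
    simpa [hXh] using this
  have h1 : (A + B * F)ᴴᴴ * X + X * (A + B * F)ᴴ = -(((2 * a : ℝ) : ℂ) • X + B * Bᴴ) := by
    rw [Matrix.conjTranspose_conjTranspose, Matrix.conjTranspose_add, Matrix.conjTranspose_mul,
      Matrix.add_mul, Matrix.mul_add, Matrix.mul_assoc, hF, ← Matrix.mul_assoc X, hF']
    have : A * X = B * Bᴴ - ((2 * a : ℝ) : ℂ) • X - X * Aᴴ := by rw [← hX2]; abel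
    rw [this, Matrix.mul_neg, Matrix.neg_mul]; abel
  have h2 := lure_quad _ X w s hs
  rw [h1] at h2
  have hBp := (Matrix.posSemidef_self_mul_conjTranspose B).re_dotProduct_nonneg w
  have hX0 := hXp.re_dotProduct_nonneg w
  have h3 : (2 * s.re + 2 * a) * (star w ⬝ᵥ (X *ᵥ w)).re = - (star w ⬝ᵥ ((B * Bᴴ) *ᵥ w)).re := by
    have := congrArg Complex.re h2
    rw [Complex.re_ofReal_mul, Matrix.neg_mulVec, Matrix.add_mulVec, Matrix.smul_mulVec,
      dotProduct_neg, dotProduct_add, dotProduct_smul, smul_eq_mul, Complex.neg_re, Complex.add_re,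
      Complex.re_ofReal_mul] at this
    linarith
  simp only [RCLike.re_eq_complex_re] at hBp hX0
  rcases hX0.eq_or_lt with h0 | h0
  · have hz : star w ⬝ᵥ (X *ᵥ w) = 0 := by
      have := hXp.dotProduct_mulVec_nonneg w
      have h5 := (Complex.nonneg_iff.1 this).2
      exact Complex.ext h0.symm h5.symm
    have hXw := (hXp.dotProduct_mulVec_zero_iff w).1 hz
    have hBw : Bᴴ *ᵥ w = 0 := by
      have := hker w hXw
      rwa [Matrix.neg_mulVec, neg_eq_zero] at this
    have hAw : Aᴴ *ᵥ w = s • w := by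
      rw [← hs, Matrix.conjTranspose_add, Matrix.conjTranspose_mul, Matrix.add_mulVec,
        ← Matrix.mulVec_mulVec, hBw, Matrix.mulVec_zero, add_zero]
    by_contra hc
    have hr := hstab (star s) (by simpa using hc)
    have := lure_rank_left _ hr (star w) (by
      rw [Matrix.vecMul_fromCols]
      have e1 : star w ᵥ* B = 0 := by
        have := congrArg star hBw
        simpa [Matrix.star_mulVec] using this
      have e2 : star w ᵥ* A = star s • star w := by
        have := congrArg star hAw
        simpa [Matrix.star_mulVec] using this
      rw [Matrix.vecMul_sub, e1, e2, Matrix.vecMul_smul, Matrix.vecMul_one, sub_self]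
      ext i; cases i <;> rfl)
    exact hw (by simpa using this)
  · by_contra hc
    have : 0 < (2 * s.re + 2 * a) * (star w ⬝ᵥ (X *ᵥ w)).re := by
      apply mul_pos _ h0
      linarith [not_lt.1 hc]
    linarith


theorem lure_entry_le {n : ℕ} {D : Matrix (Fin n) (Fin n) ℂ} (hD : D.PosSemidef) (i j : Fin n) :
    ‖D i j‖ ≤ D.trace.re := by
  have hdiag : ∀ k, 0 ≤ (D k k).re := fun k => (Complex.nonneg_iff.1 hD.diag_nonneg).1
  have htr : ∀ k, (D k k).re ≤ D.trace.re := by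
    intro k
    rw [Matrix.trace, Complex.re_sum]
    exact Finset.single_le_sum (f := fun i => (D i i).re) (fun i _ => hdiag i) (Finset.mem_univ k)
  obtain ⟨N, hN⟩ : ∃ N : Matrix (Fin n) (Fin n) ℂ, D = Nᴴ * N := by
    open scoped MatrixOrder in
    exact CStarAlgebra.nonneg_iff_eq_star_mul_self.1 (Matrix.nonneg_iff_posSemidef.2 hD)
  have hd : ∀ k, (D k k).re = ∑ l, ‖N l k‖ ^ 2 := by
    intro k
    rw [hN, Matrix.mul_apply, Complex.re_sum]
    refine Finset.sum_congr rfl fun l _ => ?_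
    rw [Matrix.conjTranspose_apply, Complex.sq_norm, Complex.normSq_apply]
    simp
  have h1 : ‖D i j‖ ≤ ((D i i).re + (D j j).re) / 2 := by
    rw [hd, hd, hN, Matrix.mul_apply, ← Finset.sum_add_distrib, Finset.sum_div]
    refine (norm_sum_le _ _).trans (Finset.sum_le_sum fun l _ => ?_)
    rw [Matrix.conjTranspose_apply, norm_mul, norm_star]
    nlinarith [sq_nonneg (‖N l i‖ - ‖N l j‖)]
  linarith [htr i, htr j]

theorem lure_compact {n : ℕ} (c : ℝ) :
    IsCompact {D : Matrix (Fin n) (Fin n) ℂ | D.PosSemidef ∧ D.trace.re ≤ c} := by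
  have hK : IsCompact (Set.pi Set.univ (fun _ : Fin n => Set.pi Set.univ
      (fun _ : Fin n => Metric.closedBall (0:ℂ) c))) :=
    isCompact_univ_pi fun _ => isCompact_univ_pi fun _ => isCompact_closedBall _ _
  refine IsCompact.of_isClosed_subset hK ?_ ?_
  · have hcl : IsClosed {D : Matrix (Fin n) (Fin n) ℂ | D.trace.re ≤ c} :=
      isClosed_le (Complex.continuous_re.comp (by fun_prop)) continuous_const
    exact IsClosed.inter lure_isClosed_posSemidef hcl
  · rintro D ⟨hD, hc⟩ i - j -
    rw [mem_closedBall_zero_iff]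
    exact (lure_entry_le hD i j).trans hc

theorem lure_tendsto_zero {n : ℕ} {D : ℕ → Matrix (Fin n) (Fin n) ℂ} (hD : ∀ k, (D k).PosSemidef)
    {u : ℕ → ℝ} (hu : ∀ k, (D k).trace.re ≤ u k) (hu0 : Tendsto u atTop (𝓝 0)) :
    Tendsto D atTop (𝓝 0) := by
  refine tendsto_pi_nhds.2 fun i => tendsto_pi_nhds.2 fun j => ?_
  exact squeeze_zero_norm (fun k => (lure_entry_le (hD k) i j).trans (hu k)) hu0

/-- closed-loop Lyapunov residual -/
def lurePhi {n m : ℕ} (A Q : Matrix (Fin n) (Fin n) ℂ) (B C : Matrix (Fin n) (Fin m) ℂ)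
    (R : Matrix (Fin m) (Fin m) ℂ) (P : Matrix (Fin n) (Fin n) ℂ) (F : Matrix (Fin m) (Fin n) ℂ) :
    Matrix (Fin n) (Fin n) ℂ :=
  (A + B * F)ᴴ * P + P * (A + B * F) + (Q + C * F + Fᴴ * Cᴴ + Fᴴ * R * F)

/-- the LMI matrix -/
abbrev lureM {n m : ℕ} (A Q : Matrix (Fin n) (Fin n) ℂ) (B C : Matrix (Fin n) (Fin m) ℂ)
    (R : Matrix (Fin m) (Fin m) ℂ) (Y : Matrix (Fin n) (Fin n) ℂ) :
    Matrix (Fin n ⊕ Fin m) (Fin n ⊕ Fin m) ℂ :=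
  fromBlocks (Aᴴ * Y + Y * A + Q) (Y * B + C) (Bᴴ * Y + Cᴴ) R

section main
variable {n m : ℕ} {A Q : Matrix (Fin n) (Fin n) ℂ} {B C : Matrix (Fin n) (Fin m) ℂ}
  {R : Matrix (Fin m) (Fin m) ℂ}

theorem lurePhi_sub (P Y : Matrix (Fin n) (Fin n) ℂ) (F : Matrix (Fin m) (Fin n) ℂ) :
    (A + B * F)ᴴ * (P - Y) + (P - Y) * (A + B * F) =
      lurePhi A Q B C R P F - lurePhi A Q B C R Y F := by
  simp only [lurePhi, Matrix.mul_sub, Matrix.sub_mul]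
  abel

theorem lurePhi_nonneg {Y : Matrix (Fin n) (Fin n) ℂ} (h : (lureM A Q B C R Y).PosSemidef)
    (F : Matrix (Fin m) (Fin n) ℂ) : (lurePhi A Q B C R Y F).PosSemidef := by
  have := h.conjTranspose_mul_mul_same (fromRows (1 : Matrix (Fin n) (Fin n) ℂ) F)
  convert this using 1
  rw [Matrix.conjTranspose_fromRows_eq_fromCols_conjTranspose, Matrix.fromCols_mul_fromBlocks,
    Matrix.fromCols_mul_fromRows]
  simp only [lurePhi, Matrix.mul_add, Matrix.add_mul, Matrix.conjTranspose_add,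
    Matrix.conjTranspose_mul, Matrix.conjTranspose_one, Matrix.one_mul, Matrix.mul_one,
    Matrix.mul_assoc]
  abel

theorem lure_gain (hR : R.PosDef) (P : Matrix (Fin n) (Fin n) ℂ) :
    R * (-(R⁻¹ * (Bᴴ * P + Cᴴ))) = -(Bᴴ * P + Cᴴ) := by
  have : IsUnit R.det := (Matrix.isUnit_iff_isUnit_det R).1 hR.isUnit
  rw [Matrix.mul_neg, ← Matrix.mul_assoc, Matrix.mul_nonsing_inv _ this, Matrix.one_mul]

theorem lurePhi_square (hR : Rᴴ = R) {P : Matrix (Fin n) (Fin n) ℂ} (hP : Pᴴ = P)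
    {G : Matrix (Fin m) (Fin n) ℂ} (hG : R * G = -(Bᴴ * P + Cᴴ)) (F : Matrix (Fin m) (Fin n) ℂ) :
    lurePhi A Q B C R P F = lurePhi A Q B C R P G + (F - G)ᴴ * R * (F - G) := by
  have h1 : Cᴴ = -(R * G) - Bᴴ * P := by rw [hG]; abel
  have h2 : C = -(Gᴴ * R) - P * B := by
    have := congrArg Matrix.conjTranspose h1
    simpa [hR, hP] using this
  simp only [lurePhi]
  rw [h1, h2]
  simp only [Matrix.mul_add, Matrix.add_mul, Matrix.mul_sub, Matrix.sub_mul,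
    Matrix.conjTranspose_add, Matrix.conjTranspose_sub,
    Matrix.conjTranspose_mul, Matrix.mul_neg, Matrix.neg_mul, Matrix.mul_assoc]
  abel

theorem lureM_of_phi (hR : R.PosDef) {P : Matrix (Fin n) (Fin n) ℂ} (hP : Pᴴ = P)
    (h : lurePhi A Q B C R P (-(R⁻¹ * (Bᴴ * P + Cᴴ))) = 0) : (lureM A Q B C R P).PosSemidef := by
  have hsq := lurePhi_square (A := A) (Q := Q) hR.1.eq hP (lure_gain (B := B) (C := C) hR P) 0
  have hb : Bᴴ * P + Cᴴ = (P * B + C)ᴴ := by simp [hP]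
  have hinv := hR.inv.1.eq
  have : IsUnit R.det := (Matrix.isUnit_iff_isUnit_det R).1 hR.isUnit
  unfold lureM
  have hinvR := hR.isUnit.invertible
  rw [hb, Matrix.PosDef.fromBlocks₂₂ _ _ hR]
  have e : Aᴴ * P + P * A + Q - (P * B + C) * R⁻¹ * (P * B + C)ᴴ = 0 := by
    rw [h, hb] at hsq
    simp only [zero_sub, neg_neg, zero_add, Matrix.conjTranspose_mul, hinv,
      Matrix.conjTranspose_conjTranspose] at hsq
    have e2 : (P * B + C) * R⁻¹ * R * (R⁻¹ * (P * B + C)ᴴ) = (P * B + C) * R⁻¹ * (P * B + C)ᴴ := by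
      rw [Matrix.mul_assoc _ R⁻¹ R, Matrix.nonsing_inv_mul _ this, Matrix.mul_one,
        Matrix.mul_assoc]
    rw [e2] at hsq
    rw [← hsq]
    simp [lurePhi]
  rw [e]
  exact Matrix.PosSemidef.zero

theorem lure_upper {P Y : Matrix (Fin n) (Fin n) ℂ} {F : Matrix (Fin m) (Fin n) ℂ}
    (hF : LStab (A + B * F)) (hPF : lurePhi A Q B C R P F = 0)
    (hY : (lureM A Q B C R Y).PosSemidef) : (P - Y).PosSemidef := by
  refine hF.posSemidef (lurePhi_nonneg hY F) ?_
  rw [lurePhi_sub (Q := Q) (C := C) (R := R), hPF, zero_sub]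

theorem lure_newton (hQ : Qᴴ = Q) (hR : R.PosDef) {P Y : Matrix (Fin n) (Fin n) ℂ}
    {F : Matrix (Fin m) (Fin n) ℂ} (hP : Pᴴ = P)
    (hF : LStab (A + B * F)) (hPF : lurePhi A Q B C R P F = 0)
    (hY : (lureM A Q B C R Y).PosSemidef) :
    ∃ P' : Matrix (Fin n) (Fin n) ℂ, P'ᴴ = P' ∧
      LStab (A + B * (-(R⁻¹ * (Bᴴ * P + Cᴴ)))) ∧
      lurePhi A Q B C R P' (-(R⁻¹ * (Bᴴ * P + Cᴴ))) = 0 ∧ (P - P').PosSemidef := by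
  have hRG := lure_gain (B := B) (C := C) hR P
  set G := -(R⁻¹ * (Bᴴ * P + Cᴴ)) with hG
  have hsq := lurePhi_square (A := A) (Q := Q) hR.1.eq hP hRG F
  have hPG : lurePhi A Q B C R P G = -((F - G)ᴴ * R * (F - G)) := by
    rw [hPF] at hsq
    exact eq_neg_of_add_eq_zero_left hsq.symm
  have hPY := lure_upper hF hPF hY
  have hpsd : ((F - G)ᴴ * R * (F - G)).PosSemidef := hR.posSemidef.conjTranspose_mul_mul_same _
  have hst : LStab (A + B * G) := by
    intro s v hv hs
    by_contra hc
    have hc := not_lt.1 hc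
    have h1 := lure_quad _ (P - Y) v s hs
    rw [lurePhi_sub (Q := Q) (C := C) (R := R), hPG] at h1
    have h2 := congrArg Complex.re h1
    rw [Complex.re_ofReal_mul, Matrix.sub_mulVec, Matrix.neg_mulVec, dotProduct_sub, dotProduct_neg,
      Complex.sub_re, Complex.neg_re] at h2
    have h3 := hPY.re_dotProduct_nonneg v
    have h4 := hpsd.re_dotProduct_nonneg v
    have h5 := (lurePhi_nonneg hY G).re_dotProduct_nonneg v
    simp only [RCLike.re_eq_complex_re] at h3 h4 h5
    have h6 : (star v ⬝ᵥ (((F - G)ᴴ * R * (F - G)) *ᵥ v)).re = 0 := by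
      have := mul_nonneg (by linarith : 0 ≤ 2 * s.re) h3
      linarith
    have h7 : (F - G) *ᵥ v = 0 := by
      by_contra hne
      have h8 := hR.re_dotProduct_pos hne
      have h9 : star v ⬝ᵥ (((F - G)ᴴ * R * (F - G)) *ᵥ v) =
          star ((F - G) *ᵥ v) ⬝ᵥ (R *ᵥ ((F - G) *ᵥ v)) := by
        rw [Matrix.mul_assoc, ← Matrix.mulVec_mulVec, ← Matrix.mulVec_mulVec,
          Matrix.dotProduct_mulVec, ← Matrix.star_mulVec]
      rw [h9] at h6
      simp only [RCLike.re_eq_complex_re] at h8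
      linarith
    have h10 : (A + B * F) *ᵥ v = s • v := by
      rw [← hs]
      have : A + B * F = A + B * G + B * (F - G) := by rw [Matrix.mul_sub]; abel
      rw [this, Matrix.add_mulVec (A + B * G), ← Matrix.mulVec_mulVec v B (F - G), h7,
        Matrix.mulVec_zero, add_zero]
    exact absurd (hF s v hv h10) (not_lt.2 hc)
  obtain ⟨P', hP'h, hP'⟩ := hst.solve (Q + C * G + Gᴴ * Cᴴ + Gᴴ * R * G) (by
    simp only [Matrix.conjTranspose_add, Matrix.conjTranspose_mul,
      Matrix.conjTranspose_conjTranspose, hQ, hR.1.eq, Matrix.mul_assoc]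
    abel)
  have hP'0 : lurePhi A Q B C R P' G = 0 := by
    rw [lurePhi, hP', neg_add_cancel]
  refine ⟨P', hP'h, hst, hP'0, hst.posSemidef hpsd ?_⟩
  rw [lurePhi_sub (Q := Q) (C := C) (R := R), hPG, hP'0, sub_zero]

theorem lure_max_posDef (hQ : Qᴴ = Q) (hR : R.PosDef)
    (hst : ∃ F : Matrix (Fin m) (Fin n) ℂ, LStab (A + B * F))
    {Y₀ : Matrix (Fin n) (Fin n) ℂ} (hY₀h : Y₀ᴴ = Y₀) (hY₀ : (lureM A Q B C R Y₀).PosSemidef) :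
    ∃ X : Matrix (Fin n) (Fin n) ℂ, Xᴴ = X ∧ (lureM A Q B C R X).PosSemidef ∧
      ∀ Y : Matrix (Fin n) (Fin n) ℂ, (lureM A Q B C R Y).PosSemidef → (X - Y).PosSemidef := by
  let S : Set (Matrix (Fin n) (Fin n) ℂ) :=
    {P | Pᴴ = P ∧ ∃ F : Matrix (Fin m) (Fin n) ℂ, LStab (A + B * F) ∧ lurePhi A Q B C R P F = 0}
  let T : Set ℝ := (fun P : Matrix (Fin n) (Fin n) ℂ => P.trace.re) '' S
  have hSne : S.Nonempty := by
    obtain ⟨F, hF⟩ := hst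
    obtain ⟨P, hPh, hP⟩ := hF.solve (Q + C * F + Fᴴ * Cᴴ + Fᴴ * R * F) (by
      simp only [Matrix.conjTranspose_add, Matrix.conjTranspose_mul,
        Matrix.conjTranspose_conjTranspose, hQ, hR.1.eq, Matrix.mul_assoc]
      abel)
    exact ⟨P, hPh, F, hF, by rw [lurePhi, hP, neg_add_cancel]⟩
  have hSup : ∀ P ∈ S, ∀ Y : Matrix (Fin n) (Fin n) ℂ, (lureM A Q B C R Y).PosSemidef →
      (P - Y).PosSemidef := by
    rintro P ⟨-, F, hF, hPF⟩ Y hY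
    exact lure_upper hF hPF hY
  have hTb : BddBelow T := by
    refine ⟨Y₀.trace.re, ?_⟩
    rintro _ ⟨P, hP, rfl⟩
    have := (Complex.nonneg_iff.1 (hSup P hP Y₀ hY₀).trace_nonneg).1
    rw [Matrix.trace_sub, Complex.sub_re] at this
    simpa using this
  obtain ⟨u, hanti, hu, huT⟩ := exists_seq_tendsto_sInf (hSne.image _) hTb
  choose P hPS hPu using huT
  have hnext : ∀ k, ∃ P' : Matrix (Fin n) (Fin n) ℂ, P' ∈ S ∧
      lurePhi A Q B C R P' (-(R⁻¹ * (Bᴴ * P k + Cᴴ))) = 0 ∧ (P k - P').PosSemidef := by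
    intro k
    obtain ⟨hPh, F, hF, hPF⟩ := hPS k
    obtain ⟨P', h1, h2, h3, h4⟩ := lure_newton hQ hR hPh hF hPF hY₀
    exact ⟨P', ⟨h1, _, h2, h3⟩, h3, h4⟩
  choose P' hP'S hP'0 hP'le using hnext
  have hdiff : Tendsto (fun k => P k - P' k) atTop (𝓝 0) := by
    refine lure_tendsto_zero hP'le (u := fun k => u k - sInf T) ?_ ?_
    · intro k
      have h1 : sInf T ≤ (P' k).trace.re := csInf_le hTb ⟨P' k, hP'S k, rfl⟩
      have h2 : (P k).trace.re = u k := hPu k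
      rw [Matrix.trace_sub, Complex.sub_re]
      linarith
    · have := hu.sub_const (sInf T)
      rwa [sub_self] at this
  have : FirstCountableTopology (Matrix (Fin n) (Fin n) ℂ) :=
    inferInstanceAs (FirstCountableTopology (Fin n → Fin n → ℂ))
  obtain ⟨D, -, φ, hφ, hlim⟩ := (lure_compact (n := n) (u 0 - Y₀.trace.re)).tendsto_subseq
    (x := fun k => P k - Y₀) (fun k => ⟨hSup _ (hPS k) _ hY₀, by
      have h2 : (P k).trace.re = u k := hPu k
      have := hanti (Nat.zero_le k)
      rw [Matrix.trace_sub, Complex.sub_re]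
      linarith⟩)
  have hPl : Tendsto (fun k => P (φ k)) atTop (𝓝 (D + Y₀)) := by
    have := hlim.add_const Y₀
    simpa [Function.comp_def] using this
  have hP'l : Tendsto (fun k => P' (φ k)) atTop (𝓝 (D + Y₀)) := by
    have := hPl.sub (hdiff.comp hφ.tendsto_atTop)
    simpa [Function.comp_def] using this
  set X := D + Y₀ with hX
  have hXh : Xᴴ = X := by
    have h1 : Tendsto (fun k => (P (φ k))ᴴ) atTop (𝓝 Xᴴ) :=
      ((by fun_prop : Continuous fun M : Matrix (Fin n) (Fin n) ℂ => Mᴴ).tendsto X).comp hPl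
    have h2 : (fun k => (P (φ k))ᴴ) = fun k => P (φ k) := funext fun k => (hPS _).1
    rw [h2] at h1
    exact tendsto_nhds_unique h1 hPl
  refine ⟨X, hXh, lureM_of_phi hR hXh ?_, ?_⟩
  · have hc : Continuous (fun p : Matrix (Fin n) (Fin n) ℂ × Matrix (Fin n) (Fin n) ℂ =>
        lurePhi A Q B C R p.1 (-(R⁻¹ * (Bᴴ * p.2 + Cᴴ)))) := by
      unfold lurePhi
      fun_prop
    have h1 := (hc.tendsto (X, X)).comp (hP'l.prodMk_nhds hPl)
    simp only [Function.comp_def, hP'0] at h1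
    exact tendsto_nhds_unique h1 tendsto_const_nhds
  · intro Y hY
    exact lure_isClosed_posSemidef.mem_of_tendsto (hPl.sub_const Y)
      (Eventually.of_forall fun k => hSup _ (hPS _) Y hY)

theorem lureM_add (Y : Matrix (Fin n) (Fin n) ℂ) {e : ℝ} (he : 0 ≤ e)
    (h : (lureM A Q B C R Y).PosSemidef) : (lureM A Q B C (R + (e : ℂ) • 1) Y).PosSemidef := by
  have h1 : (fromBlocks (0 : Matrix (Fin n) (Fin n) ℂ) 0 0 ((e : ℂ) • (1 : Matrix (Fin m) (Fin m) ℂ))).PosSemidef := by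
    have : fromBlocks (0 : Matrix (Fin n) (Fin n) ℂ) 0 0 ((e : ℂ) • (1 : Matrix (Fin m) (Fin m) ℂ))
        = Matrix.diagonal (Sum.elim (fun _ => 0) (fun _ => (e : ℂ))) := by
      rw [← Matrix.fromBlocks_diagonal, Matrix.smul_one_eq_diagonal, Matrix.diagonal_zero]
    rw [this, Matrix.posSemidef_diagonal_iff]
    rintro (i | i)
    · simp
    · simpa using he
  have := h.add h1
  rw [Matrix.fromBlocks_add] at this
  simpa using this

theorem lure_max (hQ : Qᴴ = Q)
    (hst : ∃ F : Matrix (Fin m) (Fin n) ℂ, LStab (A + B * F))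
    {Y₀ : Matrix (Fin n) (Fin n) ℂ} (hY₀h : Y₀ᴴ = Y₀) (hY₀ : (lureM A Q B C R Y₀).PosSemidef) :
    ∃ X : Matrix (Fin n) (Fin n) ℂ, Xᴴ = X ∧ (lureM A Q B C R X).PosSemidef ∧
      ∀ Y : Matrix (Fin n) (Fin n) ℂ, (lureM A Q B C R Y).PosSemidef → (X - Y).PosSemidef := by
  have hRp : R.PosSemidef := by
    have := hY₀.submatrix Sum.inr
    exact this
  let e : ℕ → ℝ := fun k => 1 / ((k : ℝ) + 1)
  have he : ∀ k, 0 < e k := fun k => by positivity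
  have hRk : ∀ k, (R + (e k : ℂ) • 1).PosDef := fun k =>
    Matrix.PosDef.posSemidef_add hRp (Matrix.PosDef.one.smul (by exact_mod_cast he k))
  have hex := fun k => lure_max_posDef (A := A) (B := B) (C := C) hQ (hRk k) hst hY₀h
    (lureM_add Y₀ (he k).le hY₀)
  choose X hXh hXM hXmax using hex
  have hle : ∀ k, (X 0 - X k).PosSemidef := by
    intro k
    apply hXmax 0
    have h1 : R + (e 0 : ℂ) • (1 : Matrix (Fin m) (Fin m) ℂ) =
        (R + (e k : ℂ) • 1) + ((e 0 - e k : ℝ) : ℂ) • 1 := by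
      push_cast; module
    rw [h1]
    refine lureM_add _ ?_ (hXM k)
    have : e k ≤ 1 := by
      simp only [e]
      rw [div_le_one (by positivity)]
      linarith [(Nat.cast_nonneg k : (0:ℝ) ≤ k)]
    have h0 : e 0 = 1 := by simp [e]
    linarith
  have : FirstCountableTopology (Matrix (Fin n) (Fin n) ℂ) :=
    inferInstanceAs (FirstCountableTopology (Fin n → Fin n → ℂ))
  obtain ⟨D, -, φ, hφ, hlim⟩ := (lure_compact (n := n) ((X 0).trace.re - Y₀.trace.re)).tendsto_subseq
    (x := fun k => X k - Y₀) (fun k => ⟨hXmax k _ (lureM_add Y₀ (he k).le hY₀), by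
      have := (Complex.nonneg_iff.1 (hle k).trace_nonneg).1
      rw [Matrix.trace_sub, Complex.sub_re] at this
      rw [Matrix.trace_sub, Complex.sub_re]
      linarith⟩)
  have hPl : Tendsto (fun k => X (φ k)) atTop (𝓝 (D + Y₀)) := by
    have := hlim.add_const Y₀
    simpa [Function.comp_def] using this
  have hel : Tendsto (fun k => e (φ k)) atTop (𝓝 0) :=
    tendsto_one_div_add_atTop_nhds_zero_nat.comp hφ.tendsto_atTop
  refine ⟨D + Y₀, ?_, ?_, ?_⟩
  · have h1 : Tendsto (fun k => (X (φ k))ᴴ) atTop (𝓝 (D + Y₀)ᴴ) :=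
      ((by fun_prop : Continuous fun M : Matrix (Fin n) (Fin n) ℂ => Mᴴ).tendsto _).comp hPl
    have h2 : (fun k => (X (φ k))ᴴ) = fun k => X (φ k) := funext fun k => hXh _
    rw [h2] at h1
    exact tendsto_nhds_unique h1 hPl
  · have hc : Continuous (fun p : Matrix (Fin n) (Fin n) ℂ × ℝ =>
        lureM A Q B C (R + (p.2 : ℂ) • 1) p.1) := by
      unfold lureM
      apply Continuous.matrix_fromBlocks <;> fun_prop
    have h1 := (hc.tendsto (D + Y₀, 0)).comp (hPl.prodMk_nhds hel)
    have h2 := lure_isClosed_posSemidef.mem_of_tendsto h1 (Eventually.of_forall fun k => hXM _)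
    simpa using h2
  · intro Y hY
    exact lure_isClosed_posSemidef.mem_of_tendsto (hPl.sub_const Y)
      (Eventually.of_forall fun k => hXmax _ Y (lureM_add Y (he _).le hY))

end main



/-- If `(A, B)` is stabilizable and the LMI is feasible, then there is a maximal
solution `X₊` of the Lur'e equations: `X₊ − Y` is positive semidefinite for every
Hermitian `Y` satisfying the LMI. -/
theorem exists_maximal_lure_solution
    (n m : ℕ) (hn : 0 < n) (hm : 0 < m)
    (A Q : Matrix (Fin n) (Fin n) ℂ) (B C : Matrix (Fin n) (Fin m) ℂ)
    (R : Matrix (Fin m) (Fin m) ℂ) (hQ : Qᴴ = Q) (hR : Rᴴ = R)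
    (hstab : ∀ s : ℂ, 0 ≤ s.re →
      (fromCols (s • (1 : Matrix (Fin n) (Fin n) ℂ) - A) B).rank = n)
    (hfeas : ∃ Y : Matrix (Fin n) (Fin n) ℂ, Yᴴ = Y ∧
      (fromBlocks (Aᴴ * Y + Y * A + Q) (Y * B + C) (Bᴴ * Y + Cᴴ) R).PosSemidef) :
    ∃ (p : ℕ) (X : Matrix (Fin n) (Fin n) ℂ) (K : Matrix (Fin p) (Fin n) ℂ)
      (L : Matrix (Fin p) (Fin m) ℂ), Xᴴ = X ∧
        Aᴴ * X + X * A + Q = Kᴴ * K ∧ X * B + C = Kᴴ * L ∧ R = Lᴴ * L ∧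
        ∀ Y : Matrix (Fin n) (Fin n) ℂ, Yᴴ = Y →
          (fromBlocks (Aᴴ * Y + Y * A + Q) (Y * B + C) (Bᴴ * Y + Cᴴ) R).PosSemidef →
          (X - Y).PosSemidef := by
  obtain ⟨Y₀, hY₀h, hY₀⟩ := hfeas
  obtain ⟨X, hXh, hXM, hmax⟩ := lure_max hQ (lure_stabilize A B hstab) hY₀h hY₀
  obtain ⟨N, hN⟩ : ∃ N : Matrix (Fin n ⊕ Fin m) (Fin n ⊕ Fin m) ℂ,
      lureM A Q B C R X = Nᴴ * N := by
    open scoped MatrixOrder in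
    exact CStarAlgebra.nonneg_iff_eq_star_mul_self.1 (Matrix.nonneg_iff_posSemidef.2 hXM)
  let e : Fin (n + m) ≃ Fin n ⊕ Fin m := finSumFinEquiv.symm
  have hb : ∀ {a b : Type} (f : a → Fin n ⊕ Fin m) (g : b → Fin n ⊕ Fin m),
      (lureM A Q B C R X).submatrix f g = (N.submatrix e f)ᴴ * (N.submatrix e g) := by
    intro a b f g
    rw [hN, Matrix.conjTranspose_submatrix, Matrix.submatrix_mul_equiv]
  refine ⟨n + m, X, N.submatrix e Sum.inl, N.submatrix e Sum.inr, hXh, ?_, ?_, ?_, ?_⟩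
  · exact hb Sum.inl Sum.inl
  · exact hb Sum.inl Sum.inr
  · exact hb Sum.inr Sum.inr
  · intro Y _ hY
    exact hmax Y hY
end

section
/- Let n, m, p be positive integers, A, Q ∈ ℂ^{n×n} with Q = Q*, B, C ∈ ℂ^{n×m}, R = R* ∈ ℂ^{m×m}, and suppose (X, K, L) ∈ ℂ^{n×n} × ℂ^{p×n} × ℂ^{p×m} with X = X* satisfies the Lur'e equations A*X + XA + Q = K*K, XB + C = K*L, R = L*L. Define 𝓔 = [[0, −I_n, 0], [I_n, 0, 0], [0, 0, 0]] ∈ ℂ^{(2n+m)×(2n+m)}, 𝓜 = [[0, A, B], [A*, Q, C], [B*, C*, R]], and V = [[X, 0], [I_n, 0], [0, I_m]] ∈ ℂ^{(2n+m)×(n+m)}. Then: (i) V has full column rank n+m; (ii) V is 𝓔-neutral, i.e. V*𝓔V = 0; (iii) with W = [[I_n, 0], [−X, K*], [0, L*]] ∈ ℂ^{(2n+m)×(n+p)}, one has 𝓔V = W·[[−I_n, 0], [0, 0]] and 𝓜V = W·[[A, B], [K, L]]; in particular the column span of V is a right deflating subspace of the even matrix pencil s𝓔 + 𝓜 associated with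 the Lur'e equations. -/
open Matrix

/-- If `(X, K, L)` solves the Lur'e equations, then the columns of
`V = [[X, 0], [I, 0], [0, I]]` span an `𝓔`-neutral right deflating subspace of the
even Lur'e pencil `s𝓔 + 𝓜`: `V` has full column rank `n + m`, `Vᴴ 𝓔 V = 0`, and
with `W = [[I, 0], [−X, Kᴴ], [0, Lᴴ]]` one has `𝓔 V = W [[−I, 0], [0, 0]]` and
`𝓜 V = W [[A, B], [K, L]]`. -/
theorem lure_solution_gives_deflating_subspace
    (n m p : ℕ) (hn : 0 < n) (hm : 0 < m) (hp : 0 < p)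
    (A Q : Matrix (Fin n) (Fin n) ℂ) (B C : Matrix (Fin n) (Fin m) ℂ)
    (R : Matrix (Fin m) (Fin m) ℂ) (hQ : Qᴴ = Q) (hR : Rᴴ = R)
    (X : Matrix (Fin n) (Fin n) ℂ) (K : Matrix (Fin p) (Fin n) ℂ)
    (L : Matrix (Fin p) (Fin m) ℂ) (hX : Xᴴ = X)
    (h1 : Aᴴ * X + X * A + Q = Kᴴ * K)
    (h2 : X * B + C = Kᴴ * L)
    (h3 : R = Lᴴ * L)
    (𝓔 𝓜 : Matrix ((Fin n ⊕ Fin n) ⊕ Fin m) ((Fin n ⊕ Fin n) ⊕ Fin m) ℂ)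
    (h𝓔 : 𝓔 = fromBlocks (fromBlocks 0 (-1) 1 0) 0 0 0)
    (h𝓜 : 𝓜 = fromBlocks (fromBlocks 0 A Aᴴ Q) (fromRows B C) (fromCols Bᴴ Cᴴ) R)
    (V : Matrix ((Fin n ⊕ Fin n) ⊕ Fin m) (Fin n ⊕ Fin m) ℂ)
    (hV : V = fromBlocks (fromRows X 1) 0 0 1)
    (W : Matrix ((Fin n ⊕ Fin n) ⊕ Fin m) (Fin n ⊕ Fin p) ℂ)
    (hW : W = fromBlocks (fromRows 1 (-X)) (fromRows 0 Kᴴ) 0 Lᴴ) :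
    V.rank = n + m ∧
    Vᴴ * 𝓔 * V = 0 ∧
    𝓔 * V = W * fromBlocks (-1) 0 0 0 ∧
    𝓜 * V = W * fromBlocks A B K L := by
  have h1' : Aᴴ * X + Q = -(X * A) + Kᴴ * K := by rw [← h1]; abel
  have h2' : C = -(X * B) + Kᴴ * L := by rw [← h2]; abel
  have h4 : Bᴴ * X + Cᴴ = Lᴴ * K := by
    have := congrArg conjTranspose h2
    simpa [conjTranspose_mul, hX] using this
  have add_rows : ∀ {k l q : ℕ} (a c : Matrix (Fin k) (Fin q) ℂ) (b d : Matrix (Fin l) (Fin q) ℂ),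
      fromRows a b + fromRows c d = fromRows (a + c) (b + d) := by
    intro k l q a c b d
    ext (i | i) j <;> simp
  have zero_rows : ∀ {k l q : ℕ},
      fromRows (0 : Matrix (Fin k) (Fin q) ℂ) (0 : Matrix (Fin l) (Fin q) ℂ) = 0 := by
    intro k l q
    ext (i | i) j <;> simp
  have hEV : 𝓔 * V = W * (fromBlocks (-1) 0 0 0 : Matrix (Fin n ⊕ Fin p) (Fin n ⊕ Fin m) ℂ) := by
    subst h𝓔 hV hW
    simp [fromBlocks_multiply, fromBlocks_mul_fromRows, fromRows_mul, zero_rows]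
  refine ⟨?_, ?_, hEV, ?_⟩
  · apply le_antisymm
    · simpa using V.rank_le_card_width
    · have hU : (fromBlocks (fromCols 0 1) 0 0 1 :
          Matrix (Fin n ⊕ Fin m) ((Fin n ⊕ Fin n) ⊕ Fin m) ℂ) * V = 1 := by
        subst hV
        simp [fromBlocks_multiply, fromCols_mul_fromRows]
      have := rank_mul_le_right (fromBlocks (fromCols 0 1) 0 0 1 :
          Matrix (Fin n ⊕ Fin m) ((Fin n ⊕ Fin n) ⊕ Fin m) ℂ) V
      rw [hU, rank_one] at this
      simpa using this
  · rw [Matrix.mul_assoc, hEV]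
    subst hV hW
    simp [fromBlocks_multiply, fromBlocks_conjTranspose, conjTranspose_fromRows_eq_fromCols_conjTranspose,
      fromCols_mul_fromRows, fromRows_mul, hX]
  · subst h𝓜 hV hW
    simp only [fromBlocks_multiply, fromBlocks_mul_fromRows, fromRows_mul, fromCols_mul_fromRows,
      add_rows, Matrix.mul_zero, Matrix.zero_mul, Matrix.mul_one, Matrix.one_mul, add_zero, zero_add,
      Matrix.neg_mul, h1', h4, ← h2', ← h3]
end

section
/- Let E ∈ ℂ^{N×N}, F ∈ ℂ^{M×M}, G ∈ ℂ^{N×M}, H ∈ ℂ^{M×N} with I_N − GH invertible (equivalently, I_M − HG invertible). Define the SSF-I pencil 𝓐 − s𝓔 with 𝓐 = [[E, 0], [−H, I_M]], 𝓔 = [[I_N, −G], [0, F]], and define 𝓐_* = [[E(I_N − GH)^{−1}, 0], [−F(I_M − HG)^{−1}H, I_M]], 𝓔_* = [[I_N, −E(I_N − GH)^{−1}G], [0, F(I_M − HG)^{−1}]]. Then 𝓐_*𝓔 = 𝓔_*𝓐, and the product pencil is again in SSF-I: 𝓐_*𝓐 = [[E(I_N − GH)^{−1}E, 0], [−(H +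 F(I_M − HG)^{−1}HE), I_M]] and 𝓔_*𝓔 = [[I_N, −(G + E(I_N − GH)^{−1}GF)], [0, F(I_M − HG)^{−1}F]]. -/
open Matrix

/-- One doubling step for a pencil in SSF-I: with `𝓐⋆`, `𝓔⋆` as prescribed one has
`𝓐⋆𝓔 = 𝓔⋆𝓐`, and the product pencil `𝓐⋆𝓐 − s𝓔⋆𝓔` is again in SSF-I with the
doubled blocks. -/
theorem sda_step_ssf1
    (N M : ℕ)
    (E : Matrix (Fin N) (Fin N) ℂ) (F : Matrix (Fin M) (Fin M) ℂ)
    (G : Matrix (Fin N) (Fin M) ℂ) (H : Matrix (Fin M) (Fin N) ℂ)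
    (hGH : IsUnit (1 - G * H)) :
    (fromBlocks (E * (1 - G * H)⁻¹) (0 : Matrix (Fin N) (Fin M) ℂ)
          (-(F * (1 - H * G)⁻¹ * H)) (1 : Matrix (Fin M) (Fin M) ℂ)) *
        (fromBlocks (1 : Matrix (Fin N) (Fin N) ℂ) (-G)
          (0 : Matrix (Fin M) (Fin N) ℂ) F) =
      (fromBlocks (1 : Matrix (Fin N) (Fin N) ℂ) (-(E * (1 - G * H)⁻¹ * G))
          (0 : Matrix (Fin M) (Fin N) ℂ) (F * (1 - H * G)⁻¹)) *
        (fromBlocks E (0 : Matrix (Fin N) (Fin M) ℂ) (-H)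
          (1 : Matrix (Fin M) (Fin M) ℂ)) ∧
    (fromBlocks (E * (1 - G * H)⁻¹) (0 : Matrix (Fin N) (Fin M) ℂ)
          (-(F * (1 - H * G)⁻¹ * H)) (1 : Matrix (Fin M) (Fin M) ℂ)) *
        (fromBlocks E (0 : Matrix (Fin N) (Fin M) ℂ) (-H)
          (1 : Matrix (Fin M) (Fin M) ℂ)) =
      fromBlocks (E * (1 - G * H)⁻¹ * E) (0 : Matrix (Fin N) (Fin M) ℂ)
        (-(H + F * (1 - H * G)⁻¹ * H * E)) (1 : Matrix (Fin M) (Fin M) ℂ) ∧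
    (fromBlocks (1 : Matrix (Fin N) (Fin N) ℂ) (-(E * (1 - G * H)⁻¹ * G))
          (0 : Matrix (Fin M) (Fin N) ℂ) (F * (1 - H * G)⁻¹)) *
        (fromBlocks (1 : Matrix (Fin N) (Fin N) ℂ) (-G)
          (0 : Matrix (Fin M) (Fin N) ℂ) F) =
      fromBlocks (1 : Matrix (Fin N) (Fin N) ℂ) (-(G + E * (1 - G * H)⁻¹ * G * F))
        (0 : Matrix (Fin M) (Fin N) ℂ) (F * (1 - H * G)⁻¹ * F) := by
  have d1 : IsUnit (1 - G * H).det := (Matrix.isUnit_iff_isUnit_det _).1 hGH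
  have d2 : IsUnit (1 - H * G).det := by
    rwa [Matrix.det_one_sub_mul_comm]
  have hX := Matrix.nonsing_inv_mul _ d1
  have hY := Matrix.nonsing_inv_mul _ d2
  generalize (1 - G * H)⁻¹ = X at *
  generalize (1 - H * G)⁻¹ = Y at *
  rw [Matrix.mul_sub, Matrix.mul_one] at hX hY
  have e1 : X = 1 + X * (G * H) := by rw [← hX]; abel
  have e2 : Y = 1 + Y * (H * G) := by rw [← hY]; abel
  have k1 : E * X = E + E * X * G * H := by
    conv_lhs => rw [e1]
    simp only [Matrix.mul_add, Matrix.mul_one, Matrix.mul_assoc]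
  have k2 : F * Y * H * G + F = F * Y := by
    conv_rhs => rw [e2]
    simp only [Matrix.mul_add, Matrix.mul_one, Matrix.mul_assoc]
    abel
  refine ⟨?_, ?_, ?_⟩
  · rw [fromBlocks_multiply, fromBlocks_multiply, fromBlocks_inj]
    refine ⟨?_, ?_, ?_, ?_⟩
    · simpa using k1
    · simp
    · simp
    · simpa using k2
  · rw [fromBlocks_multiply, fromBlocks_inj]
    refine ⟨?_, ?_, ?_, ?_⟩ <;> simp [add_comm]
  · rw [fromBlocks_multiply, fromBlocks_inj]
    refine ⟨?_, ?_, ?_, ?_⟩ <;> simp [add_comm]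
end

section
/- Let n be a positive integer and let E, F, G, H ∈ ℝ^{n×n}. The SSF-I pencil 𝓐 − s𝓔 with 𝓐 = [[E, 0], [−H, I_n]] and 𝓔 = [[I_n, −G], [0, F]] is symplectic, i.e. 𝓔J𝓔^T = 𝓐J𝓐^T where J = [[0, I_n], [−I_n, 0]], if and only if F = E^T, G = G^T and H = H^T. -/
open Matrix

/-- An SSF-I pencil with equal block sizes is symplectic (`𝓔J𝓔ᵀ = 𝓐J𝓐ᵀ`)
if and only if `F = Eᵀ`, `G = Gᵀ` and `H = Hᵀ`. -/
theorem ssf1_symplectic_iff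
    (n : ℕ) (hn : 0 < n) (E F G H : Matrix (Fin n) (Fin n) ℝ) :
    (fromBlocks (1 : Matrix (Fin n) (Fin n) ℝ) (-G) (0 : Matrix (Fin n) (Fin n) ℝ) F) *
          fromBlocks (0 : Matrix (Fin n) (Fin n) ℝ) (1 : Matrix (Fin n) (Fin n) ℝ)
            (-1 : Matrix (Fin n) (Fin n) ℝ) (0 : Matrix (Fin n) (Fin n) ℝ) *
          (fromBlocks (1 : Matrix (Fin n) (Fin n) ℝ) (-G)
            (0 : Matrix (Fin n) (Fin n) ℝ) F)ᵀ =
        (fromBlocks E (0 : Matrix (Fin n) (Fin n) ℝ) (-H) (1 : Matrix (Fin n) (Fin n) ℝ)) *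
          fromBlocks (0 : Matrix (Fin n) (Fin n) ℝ) (1 : Matrix (Fin n) (Fin n) ℝ)
            (-1 : Matrix (Fin n) (Fin n) ℝ) (0 : Matrix (Fin n) (Fin n) ℝ) *
          (fromBlocks E (0 : Matrix (Fin n) (Fin n) ℝ) (-H)
            (1 : Matrix (Fin n) (Fin n) ℝ))ᵀ ↔
      F = Eᵀ ∧ G = Gᵀ ∧ H = Hᵀ := by
  simp only [fromBlocks_transpose, fromBlocks_multiply, fromBlocks_inj, transpose_neg,
    transpose_one, transpose_zero, Matrix.mul_zero, Matrix.zero_mul, Matrix.mul_one,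
    Matrix.one_mul, Matrix.mul_neg, Matrix.neg_mul, neg_neg, neg_zero, add_zero, zero_add]
  constructor
  · rintro ⟨h1, -, h3, h4⟩
    refine ⟨neg_injective h3, ?_, ?_⟩
    · rw [← sub_eq_zero, ← h1]; abel
    · rw [eq_comm, ← sub_eq_zero, h4]; abel
  · rintro ⟨h1, h2, h3⟩
    subst h1
    rw [← h2, ← h3]
    simp
end

section
/- Let E, G, H ∈ ℂ^{n×n} with G = G*, H = H*, and I − GH invertible, and set F = E*. Then the blocks produced by one step of the structured doubling algorithm preserve this structure: G' = G + E(I − GH)^{−1}GE* satisfies G' = (G')*, H' = H + E*(I − HG)^{−1}HE satisfies H' = (H')*, and F' = E*(I − HG)^{−1}E* equals (E')*, where E' = E(I − GH)^{−1}E. -/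
open Matrix

/-- One SDA step preserves the symplectic structure `F = Eᴴ`, `G = Gᴴ`, `H = Hᴴ`
of the SSF-I blocks. -/
theorem sda_step_preserves_symplectic_structure
    (n : ℕ) (E G H : Matrix (Fin n) (Fin n) ℂ)
    (hG : Gᴴ = G) (hH : Hᴴ = H) (hGH : IsUnit (1 - G * H)) :
    (G + E * (1 - G * H)⁻¹ * G * Eᴴ)ᴴ = G + E * (1 - G * H)⁻¹ * G * Eᴴ ∧
    (H + Eᴴ * (1 - H * G)⁻¹ * H * E)ᴴ = H + Eᴴ * (1 - H * G)⁻¹ * H * E ∧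
    Eᴴ * (1 - H * G)⁻¹ * Eᴴ = (E * (1 - G * H)⁻¹ * E)ᴴ := by
  have hc : (1 - G * H)ᴴ = 1 - H * G := by
    simp [conjTranspose_sub, conjTranspose_mul, hG, hH]
  have hc' : (1 - H * G)ᴴ = 1 - G * H := by
    simp [conjTranspose_sub, conjTranspose_mul, hG, hH]
  have hA : IsUnit (1 - G * H).det := (Matrix.isUnit_iff_isUnit_det _).1 hGH
  have hB : IsUnit (1 - H * G).det := by
    rw [← hc, det_conjTranspose]
    exact hA.star
  have key : ∀ A B X : Matrix (Fin n) (Fin n) ℂ, IsUnit A.det → IsUnit B.det →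
      A * X = X * B → X * B⁻¹ = A⁻¹ * X := by
    intro A B X hA hB h
    calc X * B⁻¹ = A⁻¹ * (A * X) * B⁻¹ := by rw [Matrix.nonsing_inv_mul_cancel_left _ _ hA]
      _ = A⁻¹ * X := by rw [h, ← Matrix.mul_assoc, Matrix.mul_nonsing_inv_cancel_right _ _ hB]
  have k1 : G * (1 - H * G)⁻¹ = (1 - G * H)⁻¹ * G := key _ _ _ hA hB (by noncomm_ring)
  have k2 : H * (1 - G * H)⁻¹ = (1 - H * G)⁻¹ * H := key _ _ _ hB hA (by noncomm_ring)
  refine ⟨?_, ?_, ?_⟩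
  · simp only [conjTranspose_add, conjTranspose_mul, conjTranspose_nonsing_inv, hc,
      conjTranspose_conjTranspose, hG]
    rw [Matrix.mul_assoc E, ← k1]
    simp only [Matrix.mul_assoc]
  · simp only [conjTranspose_add, conjTranspose_mul, conjTranspose_nonsing_inv, hc',
      conjTranspose_conjTranspose, hH]
    rw [Matrix.mul_assoc Eᴴ (1 - H * G)⁻¹ H, ← k2]
    simp only [Matrix.mul_assoc]
  · simp only [conjTranspose_mul, conjTranspose_nonsing_inv, hc, Matrix.mul_assoc]
end

section
/- Let A, Q ∈ ℂ^{n×n} with Q = Q*, B, C ∈ ℂ^{n×m}, R = R* ∈ ℂ^{m×m}, and let γ ∈ ℝ be such that γ is not an eigenvalue of A. Then the matrix Ã = [[0, A − γI], [A* − γI, Q]] ∈ ℂ^{2n×2n} is invertible, and the Schur complement of Ã in the bordered matrix [[Ã, [B; C]], [[B* C*], R]] equals the spectral density function evaluated at γ: R − [B* C*] Ã^{−1} [B; C] = Φ(γ), where Φ(s) = [[(sI − A)^{−1}B], [I_m]]* [[Q, C], [C*, R]] [[(sI − A)^{−1}B], [I_m]]. -/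
open Matrix

/-- For real `γ` not an eigenvalue of `A`, the matrix `Ã = [[0, A − γI], [Aᴴ − γI, Q]]`
is invertible and the Schur complement `R − [Bᴴ Cᴴ] Ã⁻¹ [B; C]` equals the Popov
function `Φ(γ)`. -/
theorem schur_complement_eq_popov
    (n m : ℕ) (hn : 0 < n) (hm : 0 < m)
    (A Q : Matrix (Fin n) (Fin n) ℂ) (B C : Matrix (Fin n) (Fin m) ℂ)
    (R : Matrix (Fin m) (Fin m) ℂ) (hQ : Qᴴ = Q) (hR : Rᴴ = R)
    (γ : ℝ) (hγ : IsUnit ((γ : ℂ) • (1 : Matrix (Fin n) (Fin n) ℂ) - A)) :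
    IsUnit (fromBlocks (0 : Matrix (Fin n) (Fin n) ℂ)
        (A - (γ : ℂ) • (1 : Matrix (Fin n) (Fin n) ℂ))
        (Aᴴ - (γ : ℂ) • (1 : Matrix (Fin n) (Fin n) ℂ)) Q) ∧
    R - fromCols Bᴴ Cᴴ *
          (fromBlocks (0 : Matrix (Fin n) (Fin n) ℂ)
            (A - (γ : ℂ) • (1 : Matrix (Fin n) (Fin n) ℂ))
            (Aᴴ - (γ : ℂ) • (1 : Matrix (Fin n) (Fin n) ℂ)) Q)⁻¹ *
          fromRows B C =
      (fromRows (((γ : ℂ) • (1 : Matrix (Fin n) (Fin n) ℂ) - A)⁻¹ * B)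
          (1 : Matrix (Fin m) (Fin m) ℂ))ᴴ *
        fromBlocks Q C Cᴴ R *
        fromRows (((γ : ℂ) • (1 : Matrix (Fin n) (Fin n) ℂ) - A)⁻¹ * B)
          (1 : Matrix (Fin m) (Fin m) ℂ) := by
  generalize hM : (γ : ℂ) • (1 : Matrix (Fin n) (Fin n) ℂ) - A = M at *
  have h1 : A - (γ : ℂ) • (1 : Matrix (Fin n) (Fin n) ℂ) = -M := by
    rw [← hM, neg_sub]
  have h2 : Aᴴ - (γ : ℂ) • (1 : Matrix (Fin n) (Fin n) ℂ) = -Mᴴ := by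
    rw [← hM, conjTranspose_sub, conjTranspose_smul, conjTranspose_one, neg_sub]
    simp
  rw [h1, h2]
  have hd : IsUnit M.det := (Matrix.isUnit_iff_isUnit_det M).1 hγ
  have hMN : M * M⁻¹ = 1 := Matrix.mul_nonsing_inv M hd
  have hNM : M⁻¹ * M = 1 := Matrix.nonsing_inv_mul M hd
  generalize M⁻¹ = N at *
  have hMN' : Mᴴ * Nᴴ = 1 := by rw [← conjTranspose_mul, hNM, conjTranspose_one]
  have key : fromBlocks (0 : Matrix (Fin n) (Fin n) ℂ) (-M) (-Mᴴ) Q *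
      fromBlocks (-(Nᴴ * (Q * N))) (-Nᴴ) (-N) 0 = 1 := by
    rw [fromBlocks_multiply, ← fromBlocks_one]
    congr 1
    · simp [hMN]
    · simp
    · rw [neg_mul_neg, ← Matrix.mul_assoc, hMN']
      simp
    · simp [hMN']
  refine ⟨IsUnit.of_mul_eq_one _ key, ?_⟩
  rw [Matrix.inv_eq_right_inv key, conjTranspose_fromRows_eq_fromCols_conjTranspose,
    fromCols_mul_fromBlocks, fromCols_mul_fromRows, fromCols_mul_fromBlocks,
    fromCols_mul_fromRows]
  simp only [conjTranspose_mul, conjTranspose_one, Matrix.mul_neg, Matrix.neg_mul,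
    Matrix.add_mul, Matrix.one_mul, Matrix.mul_one, Matrix.mul_zero, Matrix.mul_assoc, add_zero]
  abel
end

section
/- Let A, Q ∈ ℂ^{n×n} with Q = Q*, B, C ∈ ℂ^{n×m}, R = R* ∈ ℂ^{m×m}, γ ∈ ℝ not an eigenvalue of A, and suppose Φ(γ) = R − [B* C*]Ã^{−1}[B; C] is invertible, where Ã = [[0, A − γI], [A* − γI, Q]]. Then the (2n+m)×(2n+m) matrix M_− = [[0, A − γI, B], [A* − γI, Q, C], [B*, C*, R]] is invertible, and the product M_−^{−1} M_+ with M_+ = [[0, A + γI, B], [A* + γI, Q, C], [B*, C*, R]] has the block lower-triangular form [[Â, 0_{2n×m}], [B̂, I_m]] for some B̂ ∈ ℂ^{m×2n}, where Â = I_{2n} + 2γ Ã^{−1}S + 2γ Ã^{−1}[B; C] Φ(γ)^{−1} [B* C*] Ã^{−1} S and S = [[0, I_n], [I_n, 0]]. -/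
open Matrix

/-- The Cayley-transformed Lur'e pencil: `M₋` is invertible and `M₋⁻¹ M₊` has the
block lower-triangular form `[[Â, 0], [B̂, I]]`. -/
theorem cayley_lure_pencil_block_form
    (n m : ℕ) (hn : 0 < n) (hm : 0 < m)
    (A Q : Matrix (Fin n) (Fin n) ℂ) (B C : Matrix (Fin n) (Fin m) ℂ)
    (R : Matrix (Fin m) (Fin m) ℂ) (hQ : Qᴴ = Q) (hR : Rᴴ = R)
    (γ : ℝ) (hγ : IsUnit ((γ : ℂ) • (1 : Matrix (Fin n) (Fin n) ℂ) - A))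
    (Atil : Matrix (Fin n ⊕ Fin n) (Fin n ⊕ Fin n) ℂ)
    (hAtil : Atil = fromBlocks (0 : Matrix (Fin n) (Fin n) ℂ)
      (A - (γ : ℂ) • (1 : Matrix (Fin n) (Fin n) ℂ))
      (Aᴴ - (γ : ℂ) • (1 : Matrix (Fin n) (Fin n) ℂ)) Q)
    (Φγ : Matrix (Fin m) (Fin m) ℂ)
    (hΦγ : Φγ = R - fromCols Bᴴ Cᴴ * Atil⁻¹ * fromRows B C)
    (hΦinv : IsUnit Φγ)
    (S : Matrix (Fin n ⊕ Fin n) (Fin n ⊕ Fin n) ℂ)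
    (hS : S = fromBlocks (0 : Matrix (Fin n) (Fin n) ℂ) (1 : Matrix (Fin n) (Fin n) ℂ)
      (1 : Matrix (Fin n) (Fin n) ℂ) (0 : Matrix (Fin n) (Fin n) ℂ))
    (Ahat : Matrix (Fin n ⊕ Fin n) (Fin n ⊕ Fin n) ℂ)
    (hAhat : Ahat = 1 + ((2 * γ : ℝ) : ℂ) • (Atil⁻¹ * S) +
      ((2 * γ : ℝ) : ℂ) •
        (Atil⁻¹ * fromRows B C * Φγ⁻¹ * fromCols Bᴴ Cᴴ * Atil⁻¹ * S))
    (Mminus Mplus : Matrix ((Fin n ⊕ Fin n) ⊕ Fin m) ((Fin n ⊕ Fin n) ⊕ Fin m) ℂ)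
    (hMminus : Mminus = fromBlocks Atil (fromRows B C) (fromCols Bᴴ Cᴴ) R)
    (hMplus : Mplus = fromBlocks
      (fromBlocks (0 : Matrix (Fin n) (Fin n) ℂ)
        (A + (γ : ℂ) • (1 : Matrix (Fin n) (Fin n) ℂ))
        (Aᴴ + (γ : ℂ) • (1 : Matrix (Fin n) (Fin n) ℂ)) Q)
      (fromRows B C) (fromCols Bᴴ Cᴴ) R) :
    IsUnit Mminus ∧
    ∃ Bhat : Matrix (Fin m) (Fin n ⊕ Fin n) ℂ,
      Mminus⁻¹ * Mplus =
        fromBlocks Ahat (0 : Matrix (Fin n ⊕ Fin n) (Fin m) ℂ) Bhat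
          (1 : Matrix (Fin m) (Fin m) ℂ) := by
  have hX : IsUnit (A - (γ : ℂ) • (1 : Matrix (Fin n) (Fin n) ℂ)) := by
    have := hγ.neg
    rwa [neg_sub] at this
  have hY : IsUnit (Aᴴ - (γ : ℂ) • (1 : Matrix (Fin n) (Fin n) ℂ)) := by
    have h := hX.star
    have e : star (A - (γ : ℂ) • (1 : Matrix (Fin n) (Fin n) ℂ))
        = Aᴴ - (γ : ℂ) • (1 : Matrix (Fin n) (Fin n) ℂ) := by
      simp [star_eq_conjTranspose, conjTranspose_sub, conjTranspose_smul]
    rwa [e] at h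
  have hP : fromBlocks (0 : Matrix (Fin n) (Fin n) ℂ)
        (A + (γ : ℂ) • (1 : Matrix (Fin n) (Fin n) ℂ))
        (Aᴴ + (γ : ℂ) • (1 : Matrix (Fin n) (Fin n) ℂ)) Q
        = Atil + ((2 * γ : ℝ) : ℂ) • S := by
    rw [hAtil, hS, fromBlocks_smul, fromBlocks_add]
    congr 1
    · simp
    · push_cast; module
    · push_cast; module
    · simp
  have hAu : IsUnit Atil := by
    rw [hAtil]
    generalize A - (γ : ℂ) • (1 : Matrix (Fin n) (Fin n) ℂ) = X at hX
    generalize Aᴴ - (γ : ℂ) • (1 : Matrix (Fin n) (Fin n) ℂ) = Y at hY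
    have hXX := mul_nonsing_inv X ((isUnit_iff_isUnit_det X).1 hX)
    have hYY := mul_nonsing_inv Y ((isUnit_iff_isUnit_det Y).1 hY)
    refine IsUnit.of_mul_eq_one (fromBlocks (-(Y⁻¹ * Q * X⁻¹)) Y⁻¹ X⁻¹ 0) ?_
    rw [fromBlocks_multiply, ← fromBlocks_one]
    congr 1
    · simp [hXX]
    · simp
    · simp [← Matrix.mul_assoc, hYY]
    · simp [hYY]
  rw [hP] at hMplus
  clear hP hAtil hS
  generalize fromRows B C = U at *
  generalize fromCols Bᴴ Cᴴ = V at *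
  have hAA := mul_nonsing_inv Atil ((isUnit_iff_isUnit_det Atil).1 hAu)
  have hFF := mul_nonsing_inv Φγ ((isUnit_iff_isUnit_det Φγ).1 hΦinv)
  have hM : IsUnit Mminus := by
    letI := hAu.invertible
    rw [hMminus, isUnit_fromBlocks_iff_of_invertible₁₁, invOf_eq_nonsing_inv, ← hΦγ]
    exact hΦinv
  refine ⟨hM, -(((2 * γ : ℝ) : ℂ) • (Φγ⁻¹ * (V * (Atil⁻¹ * S)))), ?_⟩
  generalize ((2 * γ : ℝ) : ℂ) = c at *
  have key : Mplus = Mminus * fromBlocks Ahat 0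
      (-(c • (Φγ⁻¹ * (V * (Atil⁻¹ * S))))) 1 := by
    have hR' : R = Φγ + V * Atil⁻¹ * U := by rw [hΦγ]; abel
    have h1 : ∀ Z : Matrix (Fin n ⊕ Fin n) (Fin n ⊕ Fin n) ℂ, Atil * (Atil⁻¹ * Z) = Z := by
      intro Z; rw [← Matrix.mul_assoc, hAA, Matrix.one_mul]
    have h1' : ∀ Z : Matrix (Fin n ⊕ Fin n) (Fin m) ℂ, Atil * (Atil⁻¹ * Z) = Z := by
      intro Z; rw [← Matrix.mul_assoc, hAA, Matrix.one_mul]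
    have h2 : ∀ Z : Matrix (Fin m) (Fin n ⊕ Fin n) ℂ, Φγ * (Φγ⁻¹ * Z) = Z := by
      intro Z; rw [← Matrix.mul_assoc, hFF, Matrix.one_mul]
    rw [hMplus, hMminus, fromBlocks_multiply, hAhat]
    congr 1
    · simp only [Matrix.mul_add, Matrix.mul_smul, Matrix.mul_neg, Matrix.mul_one,
        Matrix.mul_assoc, h1]
      abel
    · simp
    · clear hΦγ
      rw [hR']
      simp only [Matrix.mul_add, Matrix.add_mul, Matrix.mul_smul, Matrix.mul_neg,
        Matrix.mul_one, Matrix.mul_assoc, h2, smul_add]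
      abel
    · simp
  rw [key, ← Matrix.mul_assoc, nonsing_inv_mul _ ((isUnit_iff_isUnit_det Mminus).1 hM),
    Matrix.one_mul]
end

section
/- Let Ê, Ĝ, Ĥ, X, T ∈ ℂ^{n×n} with Ê invertible and I − ĤX invertible. Suppose the columns of [X; I_n] span a right deflating subspace of the symplectic SSF-I pencil [[Ê, 0], [−Ĥ, I_n]] − s[[I_n, −Ĝ], [0, Ê*]] with eigenvalue matrix T, i.e. ÊX = (X − Ĝ)T and I − ĤX = Ê*T. Then X satisfies the discrete-time algebraic Riccati equation X = ÊX(I − ĤX)^{−1}Ê* + Ĝ. -/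
open Matrix

/-- If `[X; I]` spans a right deflating subspace with eigenvalue matrix `T` of the
symplectic SSF-I pencil `[[Ê, 0], [−Ĥ, I]] − s[[I, −Ĝ], [0, Êᴴ]]` (that is,
`ÊX = (X − Ĝ)T` and `I − ĤX = ÊᴴT`), with `Ê` and `I − ĤX` invertible, then `X`
satisfies the DARE `X = ÊX(I − ĤX)⁻¹Êᴴ + Ĝ`. -/
theorem deflating_subspace_gives_dare_solution
    (n : ℕ) (Ehat Ghat Hhat X T : Matrix (Fin n) (Fin n) ℂ)
    (hE : IsUnit Ehat)
    (hHX : IsUnit (1 - Hhat * X))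
    (h1 : Ehat * X = (X - Ghat) * T)
    (h2 : 1 - Hhat * X = Ehatᴴ * T) :
    X = Ehat * X * (1 - Hhat * X)⁻¹ * Ehatᴴ + Ghat := by
  have h3 : Ehatᴴ * (T * (1 - Hhat * X)⁻¹) = 1 := by
    rw [← Matrix.mul_assoc, ← h2]
    exact Matrix.mul_nonsing_inv _ ((Matrix.isUnit_iff_isUnit_det _).mp hHX)
  have h4 : T * (1 - Hhat * X)⁻¹ * Ehatᴴ = 1 := mul_eq_one_comm.mp h3
  rw [h1, Matrix.mul_assoc (X - Ghat), Matrix.mul_assoc (X - Ghat), h4, Matrix.mul_one,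
    sub_add_cancel]
end
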